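/- arXiv:1511.02558 — 3 statements merged into one kernel-verified Lean document; each statement's English description precedes it below -/
import Mathlib

section
/- The limit as n → ∞ of (n-1)^{5/2} · (Ẽ(n+1) + Ẽ(n-1) - 2·Ẽ(n)) equals 0, where Ẽ(m) = (1/m)·log(p(m)/T̃(m)). -/
open Real Filter Topology

/-- The partition function, as a real number. -/
noncomputable def p (n : ℕ) : ℝ := (Fintype.card (Nat.Partition n) : ℝ)

/-- `μ(x) = (π/6)·√(24x - 1)`. -/
noncomputable def mu (x : ℝ) : ℝ := π / 6 * Real.sqrt (24 * x - 1)

/-- `d = π²/(6√3)`. -/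
noncomputable def d : ℝ := π ^ 2 / (6 * Real.sqrt 3)

/-- The main term `T̃(x) = (d/μ(x)²)·(1 - 1/μ(x))·e^{μ(x)}`. -/
noncomputable def T (x : ℝ) : ℝ := d / mu x ^ 2 * (1 - 1 / mu x) * Real.exp (mu x)

/-- The error term `Ẽ(n) = (1/n)·log(p(n)/T̃(n))`. -/
noncomputable def E (n : ℕ) : ℝ := 1 / (n : ℝ) * Real.log (p n / T (n : ℝ))

/-!
By Cauchy's formula, `2π p(n)` is the integral of `e^{ns} / φ(e⁻ˢ)`, `s = t + iθ`, over `|θ| ≤ π`,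
where `φ` is Euler's product and `t` is the saddle point, `(n - 1/24) t = π² / (6 t)`. On the major
arc `|θ| ≤ t`, the modular transformation of the Dedekind eta function replaces `1 / φ(e⁻ˢ)` by
`√(s / 2π) exp(π² / 6s - s / 24)` with an exponentially small relative error; on the minor arc,
`1 / φ` is exponentially smaller than on the real axis. The substitution `s = t w²` gives the
remaining integral a primitive in terms of Gaussian ones, and its value is `2π T(n)`, again up to an
exponentially small relative error. Hence `p(n) / T(n) - 1`, and with it `E(n)`, is `O(e^{-c √n})`,
which beats every power of `n`.
-/

open Complex (I)
open scoped Complex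

/-! ### Absolutely summable evaluation of power series -/

section HasAbsSumAt

open PowerSeries

/-- `HasAbsSumAt f q a` says that the formal power series `f`, evaluated at `q`, converges
absolutely, with sum `a`. -/
structure HasAbsSumAt {R : Type*} [NormedCommRing R] (f : PowerSeries R) (q a : R) : Prop where
  summable_norm : Summable fun n => ‖coeff n f * q ^ n‖
  hasSum : HasSum (fun n => coeff n f * q ^ n) a

namespace HasAbsSumAt

variable {R : Type*} [NormedCommRing R] {f g : PowerSeries R} {q a b : R}

theorem one (q : R) : HasAbsSumAt 1 q 1 where
  summable_norm := summable_of_ne_finset_zero (s := {0}) fun n hn => by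
    simp [coeff_one, Finset.notMem_singleton.1 hn]
  hasSum := by
    simpa using hasSum_single (f := fun n => coeff n (1 : PowerSeries R) * q ^ n) 0
      fun n hn => by simp [coeff_one, hn]

theorem mul [CompleteSpace R] (hf : HasAbsSumAt f q a) (hg : HasAbsSumAt g q b) :
    HasAbsSumAt (f * g) q (a * b) := by
  have hcoeff (n : ℕ) : coeff n (f * g) * q ^ n = ∑ kl ∈ Finset.HasAntidiagonal.antidiagonal n,
      coeff kl.1 f * q ^ kl.1 * (coeff kl.2 g * q ^ kl.2) := by
    rw [coeff_mul, Finset.sum_mul]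
    refine Finset.sum_congr rfl fun kl hkl => ?_
    rw [← Finset.HasAntidiagonal.mem_antidiagonal.1 hkl, pow_add]
    ring
  have hsum := summable_norm_sum_mul_antidiagonal_of_summable_norm hf.summable_norm hg.summable_norm
  have hprod :=
    tsum_mul_tsum_eq_tsum_sum_antidiagonal_of_summable_norm hf.summable_norm hg.summable_norm
  simp_rw [← hcoeff] at hsum hprod
  refine ⟨hsum, ?_⟩
  rw [← hf.hasSum.tsum_eq, ← hg.hasSum.tsum_eq, hprod]
  exact hsum.of_norm.hasSum

theorem prod [CompleteSpace R] {ι : Type*} {s : Finset ι} {F : ι → PowerSeries R} {A : ι → R}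
    (h : ∀ i ∈ s, HasAbsSumAt (F i) q (A i)) :
    HasAbsSumAt (∏ i ∈ s, F i) q (∏ i ∈ s, A i) := by
  classical
  induction s using Finset.induction_on with
  | empty => simpa using one q
  | insert i s hi ih =>
    rw [Finset.prod_insert hi, Finset.prod_insert hi]
    exact (h i (s.mem_insert_self i)).mul (ih fun j hj => h j (Finset.mem_insert_of_mem hj))

end HasAbsSumAt

/-- The geometric series `1 + X ^ k + X ^ (2 * k) + ⋯`, in the form in which the factors of the
generating function of the partition numbers appear in Mathlib. -/
noncomputable def geomSeries (k : ℕ) : PowerSeries ℂ :=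
  open scoped PowerSeries.WithPiTopology in ∑' j : ℕ, X ^ (k * j)

open scoped PowerSeries.WithPiTopology in
theorem coeff_geomSeries {k : ℕ} (hk : k ≠ 0) (n : ℕ) :
    coeff n (geomSeries k) = if k ∣ n then 1 else 0 := by
  have hsum := WithPiTopology.summable_pow_of_constantCoeff_eq_zero
    (f := (X : PowerSeries ℂ) ^ k) (by simp [hk])
  simp_rw [← pow_mul] at hsum
  rw [geomSeries, hsum.map_tsum _ (WithPiTopology.continuous_coeff ℂ n)]
  simp_rw [coeff_X_pow]
  split_ifs with hd
  · obtain ⟨j, rfl⟩ := hd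
    rw [tsum_eq_single j fun i hi => if_neg fun h => hi (mul_left_cancel₀ hk h).symm, if_pos rfl]
  · exact (tsum_congr fun j => if_neg fun h => hd ⟨j, h⟩).trans tsum_zero

theorem hasAbsSumAt_geomSeries {k : ℕ} (hk : k ≠ 0) {q : ℂ} (hq : ‖q‖ < 1) :
    HasAbsSumAt (geomSeries k) q (1 - q ^ k)⁻¹ where
  summable_norm := by
    refine (summable_geometric_of_lt_one (norm_nonneg q) hq).of_nonneg_of_le
      (fun _ => norm_nonneg _) fun n => ?_
    rw [coeff_geomSeries hk, norm_mul, norm_pow]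
    split_ifs <;> simp
  hasSum := by
    have hinj : Function.Injective (k * ·) := mul_right_injective₀ hk
    have hqk : ‖q ^ k‖ < 1 := by simpa using pow_lt_one₀ (norm_nonneg _) hq hk
    rw [← hinj.hasSum_iff]
    · refine (hasSum_geometric_of_norm_lt_one hqk).congr_fun fun j => ?_
      simp [coeff_geomSeries hk, pow_mul]
    · intro n hn
      rw [coeff_geomSeries hk, if_neg fun ⟨j, hj⟩ => hn ⟨j, hj.symm⟩, zero_mul]

open scoped PowerSeries.WithPiTopology in
theorem tendsto_coeff_prod_geomSeries (n : ℕ) :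
    Tendsto (fun N => coeff n (∏ i ∈ Finset.range N, geomSeries (i + 1))) atTop
      (𝓝 (p n : ℂ)) := by
  have hprod := (Nat.Partition.hasProd_powerSeriesMk_card_restricted ℂ fun _ => True)
    |>.tendsto_prod_nat
  have huniv : Nat.Partition.restricted n (fun _ => True) = Finset.univ := by
    simp [Nat.Partition.restricted]
  simpa [huniv, p, geomSeries, Function.comp_def, Finset.card_univ] using
    ((WithPiTopology.continuous_coeff ℂ n).tendsto _).comp hprod

end HasAbsSumAt

/-! ### Euler's product -/

/-- Euler's product `φ(q) = ∏ (1 - qⁿ)` over `n ≥ 1`, whose inverse generates the partition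
numbers. -/
noncomputable def eulerProd (q : ℂ) : ℂ := ∏' n : ℕ, (1 - q ^ (n + 1))

theorem one_sub_pow_ne_zero {q : ℂ} (hq : ‖q‖ < 1) {k : ℕ} (hk : k ≠ 0) : 1 - q ^ k ≠ 0 := by
  intro h
  have hlt : ‖q ^ k‖ < 1 := by simpa using pow_lt_one₀ (norm_nonneg _) hq hk
  rw [← sub_eq_zero.1 h, norm_one] at hlt
  exact hlt.false

theorem eulerProd_ne_zero {q : ℂ} (hq : ‖q‖ < 1) : eulerProd q ≠ 0 := by
  refine tprod_one_add_ne_zero_of_summable (f := fun n => -q ^ (n + 1))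
    (fun n => by simpa [← sub_eq_add_neg] using one_sub_pow_ne_zero hq n.succ_ne_zero) ?_
  simpa using (summable_nat_add_iff 1).2 (summable_geometric_of_lt_one (norm_nonneg _) hq)

theorem tendsto_inv_eulerProd {q : ℂ} (hq : ‖q‖ < 1) :
    Tendsto (fun N => ∏ i ∈ Finset.range N, (1 - q ^ (i + 1))⁻¹) atTop (𝓝 (eulerProd q)⁻¹) := by
  simp_rw [Finset.prod_inv_distrib]
  exact (ModularForm.multipliable_one_sub_pow hq).hasProd.tendsto_prod_nat.inv₀
    (eulerProd_ne_zero hq)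

theorem norm_inv_one_sub_le_mul_exp {z : ℂ} (hz : ‖z‖ < 1) :
    ‖(1 - z)⁻¹‖ ≤ ‖(1 - (‖z‖ : ℂ))⁻¹‖ * rexp (-(1 / 5) * (‖z‖ - z.re)) := by
  have hz₀ : 0 < ‖1 - z‖ := norm_pos_iff.2 (by simpa using one_sub_pow_ne_zero hz one_ne_zero)
  have hr₀ : 0 ≤ ‖z‖ := norm_nonneg z
  have hr : ‖1 - (‖z‖ : ℂ)‖ = 1 - ‖z‖ := by
    rw [← Complex.ofReal_one, ← Complex.ofReal_sub, Complex.norm_of_nonneg (by linarith)]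
  set r := ‖z‖
  obtain ⟨y, hy⟩ : ∃ y, y = r - z.re := ⟨_, rfl⟩
  have hy₀ : 0 ≤ y := hy ▸ sub_nonneg.2 (Complex.re_le_norm z)
  have hy₂ : y ≤ 2 := by linarith [(abs_le.1 (Complex.abs_re_le_norm z)).1]
  have hnorm : ‖1 - z‖ ^ 2 = (1 - r) ^ 2 + 2 * y := by
    have hsq : r ^ 2 = z.re ^ 2 + z.im ^ 2 := by
      rw [Complex.sq_norm, Complex.normSq_apply]; ring
    rw [hy, Complex.sq_norm, Complex.normSq_apply]
    simp only [Complex.sub_re, Complex.one_re, Complex.sub_im, Complex.one_im]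
    linear_combination -hsq
  have hexp : rexp (2 / 5 * y) ≤ 1 + 2 * y := by
    refine (exp_bound_div_one_sub_of_interval (by positivity) (by linarith)).trans ?_
    rw [div_le_iff₀ (by linarith)]
    nlinarith
  have hsq : ((1 - r) * rexp (1 / 5 * y)) ^ 2 ≤ ‖1 - z‖ ^ 2 := by
    calc ((1 - r) * rexp (1 / 5 * y)) ^ 2 = (1 - r) ^ 2 * rexp (2 / 5 * y) := by
          rw [mul_pow, ← Real.exp_nat_mul]; ring_nf
      _ ≤ (1 - r) ^ 2 * (1 + 2 * y) := by gcongr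
      _ ≤ ‖1 - z‖ ^ 2 := by
          have : (1 - r) ^ 2 ≤ 1 := pow_le_one₀ (by linarith) (by linarith)
          rw [hnorm]; nlinarith
  have hle := le_of_sq_le_sq hsq hz₀.le
  rw [norm_inv, norm_inv, hr, ← hy, neg_mul, Real.exp_neg, ← mul_inv]
  exact inv_anti₀ (mul_pos (by linarith) (exp_pos _)) hle

theorem norm_prod_inv_one_sub_pow_le {q : ℂ} (hq : ‖q‖ < 1) (N : ℕ) :
    ‖∏ i ∈ Finset.range N, (1 - q ^ (i + 1))⁻¹‖ ≤
      ‖∏ i ∈ Finset.range N, (1 - (‖q‖ : ℂ) ^ (i + 1))⁻¹‖ *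
        rexp (-(1 / 5) * ∑ i ∈ Finset.range N, (‖q‖ ^ (i + 1) - (q ^ (i + 1)).re)) := by
  rw [norm_prod, norm_prod, Finset.mul_sum, exp_sum, ← Finset.prod_mul_distrib]
  refine Finset.prod_le_prod (fun _ _ => norm_nonneg _) fun i _ => ?_
  have hqi : ‖q ^ (i + 1)‖ < 1 := by simpa using pow_lt_one₀ (norm_nonneg _) hq i.succ_ne_zero
  simpa using norm_inv_one_sub_le_mul_exp hqi

/-- The exponent comes from summing the gains `‖qⁿ‖ - Re qⁿ` of the factors over all `n`. -/
theorem norm_inv_eulerProd_le {q : ℂ} (hq : ‖q‖ < 1) :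
    ‖(eulerProd q)⁻¹‖ ≤ ‖(eulerProd (‖q‖ : ℂ))⁻¹‖ *
      rexp (-(1 / 5) * ((1 - ‖q‖)⁻¹ - ‖1 - q‖⁻¹)) := by
  have hr : ‖(‖q‖ : ℂ)‖ < 1 := by simpa using hq
  have hsum : HasSum (fun i : ℕ => ‖q‖ ^ (i + 1)) ((1 - ‖q‖)⁻¹ - 1) := by
    simpa using (hasSum_nat_add_iff' 1).2 (hasSum_geometric_of_lt_one (norm_nonneg q) hq)
  have hsum_re : HasSum (fun i : ℕ => (q ^ (i + 1)).re) ((1 - q)⁻¹.re - 1) := by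
    simpa using Complex.hasSum_re
      ((hasSum_nat_add_iff' 1).2 (hasSum_geometric_of_norm_lt_one hq))
  have hlim := le_of_tendsto_of_tendsto' (tendsto_inv_eulerProd hq).norm
    ((tendsto_inv_eulerProd hr).norm.mul
      ((hsum.sub hsum_re).tendsto_sum_nat.const_mul (-(1 / 5))).rexp)
    (norm_prod_inv_one_sub_pow_le hq)
  have hre : (1 - q)⁻¹.re ≤ ‖1 - q‖⁻¹ := norm_inv (1 - q) ▸ Complex.re_le_norm _
  refine hlim.trans ?_
  gcongr ‖_‖ * rexp ?_
  linarith

theorem exists_norm_prod_inv_one_sub_pow_le {r : ℝ} (hr : |r| < 1) :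
    ∃ B : ℝ, ∀ q : ℂ, ‖q‖ = r → ∀ N, ‖∏ i ∈ Finset.range N, (1 - q ^ (i + 1))⁻¹‖ ≤ B := by
  have hr' : ‖(r : ℂ)‖ < 1 := by rwa [Complex.norm_real]
  obtain ⟨B, hB⟩ := (tendsto_inv_eulerProd hr').norm.bddAbove_range
  refine ⟨B, fun q hq N => ?_⟩
  refine (norm_prod_inv_one_sub_pow_le (hq.trans_lt ((le_abs_self r).trans_lt hr)) N).trans ?_
  refine le_trans (mul_le_of_le_one_right (norm_nonneg _) ?_) (hB ⟨N, by rw [hq]⟩)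
  rw [exp_le_one_iff, neg_mul, neg_nonpos]
  refine mul_nonneg (by norm_num) (Finset.sum_nonneg fun i _ => sub_nonneg.2 ?_)
  simpa using Complex.re_le_norm (q ^ (i + 1))

/-! ### Cauchy's formula on the circle `‖q‖ = e⁻ᵗ` -/

theorem norm_exp_neg_lt_one {s : ℂ} (hs : 0 < s.re) : ‖cexp (-s)‖ < 1 := by
  simpa [Complex.norm_exp] using hs

theorem integral_exp_int_mul_I (k : ℤ) :
    ∫ θ in (-π)..π, cexp (k * (θ * I)) = if k = 0 then (2 * π : ℂ) else 0 := by
  split_ifs with hk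
  · simp [hk, two_mul]
  · have hkI : (k : ℂ) * I ≠ 0 := by simp [hk]
    have hexp : cexp (k * I * (π : ℝ)) = cexp (k * I * (-π : ℝ)) :=
      Complex.exp_eq_exp_iff_exists_int.2 ⟨k, by push_cast; ring⟩
    simp_rw [mul_left_comm, mul_comm (_ : ℂ) (_ * I), integral_exp_mul_complex hkI, hexp, sub_self,
      zero_div]

theorem integral_powerSeries_mul_exp {f : PowerSeries ℂ} {F : ℂ → ℂ} {t : ℝ}
    (hf : ∀ θ : ℝ, HasAbsSumAt f (cexp (-(t + θ * I))) (F (t + θ * I))) (m : ℕ) :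
    ∫ θ in (-π)..π, F (t + θ * I) * cexp (m * (t + θ * I)) =
      2 * π * PowerSeries.coeff m f := by
  set a : ℕ → ℂ := fun n => PowerSeries.coeff n f
  have hnorm (n : ℕ) (θ : ℝ) :
      ‖a n * cexp (-(t + θ * I)) ^ n‖ = ‖a n‖ * rexp (-t) ^ n := by
    simp [Complex.norm_exp]
  have hsum : Summable fun n => ‖a n‖ * rexp (-t) ^ n :=
    (hf 0).summable_norm.congr fun n => hnorm n 0
  have hterm (n : ℕ) : ∫ θ : ℝ in (-π)..π, a n * cexp (-(t + θ * I)) ^ n *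
      cexp (m * (t + θ * I)) = if n = m then 2 * π * a m else 0 := by
    have hexp (θ : ℝ) : a n * cexp (-(t + θ * I)) ^ n * cexp (m * (t + θ * I)) =
        a n * cexp ((m - n) * t) * cexp (((m - n : ℤ) : ℂ) * (θ * I)) := by
      rw [← Complex.exp_nat_mul, mul_assoc, mul_assoc, ← Complex.exp_add, ← Complex.exp_add]
      push_cast
      ring_nf
    simp_rw [hexp]
    rw [intervalIntegral.integral_const_mul, integral_exp_int_mul_I]
    rcases eq_or_ne n m with rfl | hnm
    · simp [mul_comm]
    · rw [if_neg (by omega), if_neg hnm, mul_zero]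
  have hint : HasSum (fun n => ∫ θ : ℝ in (-π)..π, a n * cexp (-(t + θ * I)) ^ n *
      cexp (m * (t + θ * I)))
      (∫ θ in (-π)..π, F (t + θ * I) * cexp (m * (t + θ * I))) := by
    refine intervalIntegral.hasSum_integral_of_dominated_convergence
      (fun n _ => ‖a n‖ * rexp (-t) ^ n * rexp (m * t)) (fun n => ?_)
      (fun n => .of_forall fun θ _ => ?_) (.of_forall fun _ _ => hsum.mul_right _) (by simp)
      (.of_forall fun θ _ => (hf θ).hasSum.mul_right _)
    · exact Continuous.aestronglyMeasurable (by fun_prop)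
    · rw [norm_mul, hnorm, Complex.norm_exp]
      simp
  simp_rw [hterm] at hint
  exact hint.unique (by simpa using hasSum_ite_eq m (2 * π * a m))

theorem integral_inv_eulerProd_mul_exp {t : ℝ} (ht : 0 < t) (m : ℕ) :
    ∫ θ in (-π)..π, (eulerProd (cexp (-(t + θ * I))))⁻¹ *
      cexp (m * (t + θ * I)) = 2 * π * p m := by
  have hq (θ : ℝ) : ‖cexp (-(t + θ * I))‖ < 1 := norm_exp_neg_lt_one (by simpa using ht)
  obtain ⟨B, hB⟩ := exists_norm_prod_inv_one_sub_pow_le (r := rexp (-t)) (by simpa using ht)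
  have hlim : Tendsto (fun N => ∫ θ in (-π)..π,
      (∏ i ∈ Finset.range N, (1 - cexp (-(t + θ * I)) ^ (i + 1))⁻¹) *
        cexp (m * (t + θ * I))) atTop
      (𝓝 (∫ θ in (-π)..π, (eulerProd (cexp (-(t + θ * I))))⁻¹ *
        cexp (m * (t + θ * I)))) := by
    refine intervalIntegral.tendsto_integral_filter_of_dominated_convergence
      (fun _ => B * rexp (m * t)) (.of_forall fun N => ?_)
      (.of_forall fun N => .of_forall fun θ _ => ?_) (by simp)
      (.of_forall fun θ _ => (tendsto_inv_eulerProd (hq θ)).mul_const _)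
    · refine Continuous.aestronglyMeasurable (.mul (continuous_finsetProd _ fun i _ => ?_) ?_)
      · exact .inv₀ (by fun_prop) fun θ => one_sub_pow_ne_zero (hq θ) i.succ_ne_zero
      · fun_prop
    · have hre : (m * (t + θ * I) : ℂ).re = m * t := by simp
      rw [norm_mul, Complex.norm_exp, hre]
      gcongr
      exact hB _ (by simp [Complex.norm_exp]) N
  have hpartial (N : ℕ) := integral_powerSeries_mul_exp
    (F := fun s => ∏ i ∈ Finset.range N, (1 - cexp (-s) ^ (i + 1))⁻¹) (t := t)
    (fun θ => .prod fun i _ => hasAbsSumAt_geomSeries i.succ_ne_zero (hq θ)) m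
  simp_rw [hpartial] at hlim
  exact tendsto_nhds_unique hlim ((tendsto_coeff_prod_geomSeries m).const_mul _)

/-! ### The modular transformation -/

theorem csqrt_sq (z : ℂ) : Complex.sqrt z ^ 2 = z := by
  simp [Complex.sqrt]

theorem norm_csqrt_le_one {z : ℂ} (hz : ‖z‖ ≤ 1) : ‖Complex.sqrt z‖ ≤ 1 := by
  rwa [← sq_le_one_iff₀ (norm_nonneg _), ← norm_pow, csqrt_sq]

theorem csqrt_ne_zero {z : ℂ} (hz : z ≠ 0) : Complex.sqrt z ≠ 0 := by
  rw [sqrt_eq_exp hz]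
  exact Complex.exp_ne_zero _

theorem csqrt_I_mul {z : ℂ} (hz : 0 < z.re) :
    Complex.sqrt (I * z) = Complex.sqrt I * Complex.sqrt z := by
  have hz₀ : z ≠ 0 := Complex.ne_zero_of_re_pos hz
  have harg := abs_lt.1 (Complex.abs_arg_lt_pi_div_two_iff.2 (.inl hz))
  rw [sqrt_eq_exp (mul_ne_zero Complex.I_ne_zero hz₀), sqrt_eq_exp Complex.I_ne_zero,
    sqrt_eq_exp hz₀, Complex.log_mul Complex.I_ne_zero hz₀, ← Complex.exp_add, add_div]
  rw [Complex.arg_I]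
  constructor <;> linarith [harg.1, harg.2, pi_pos]

theorem csqrt_ofReal_mul {a : ℝ} (ha : 0 < a) {z : ℂ} (hz : z ≠ 0) :
    Complex.sqrt (a * z) = √a * Complex.sqrt z := by
  have ha' : (a : ℂ) ≠ 0 := by exact_mod_cast ha.ne'
  rw [sqrt_eq_exp (mul_ne_zero ha' hz), sqrt_eq_exp hz, Complex.log_ofReal_mul ha hz, add_div,
    Complex.exp_add, sqrt_eq_rpow, rpow_def_of_pos ha]
  push_cast
  ring_nf

theorem eta_I_mul_div_two_pi (s : ℂ) :
    ModularForm.eta (I * (s / (2 * π))) = cexp (-s / 24) * eulerProd (cexp (-s)) := by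
  have hexp : 2 * π * I * (I * (s / (2 * π))) = -s := by
    field_simp
    rw [Complex.I_sq]
    ring
  simp only [ModularForm.eta, Function.Periodic.qParam, ModularForm.eta_q_eq_pow, eulerProd, hexp]
  norm_num

theorem re_ofReal_div (a : ℝ) (s : ℂ) :
    ((a : ℂ) / s).re = a * s.re / (s.re ^ 2 + s.im ^ 2) := by
  rw [div_eq_mul_inv, Complex.re_ofReal_mul, Complex.inv_re, Complex.normSq_apply, mul_div_assoc,
    sq, sq]

theorem re_ofReal_div_pos {a : ℝ} (ha : 0 < a) {s : ℂ} (hs : 0 < s.re) :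
    0 < ((a : ℂ) / s).re := by
  rw [re_ofReal_div]
  positivity

theorem re_div_two_pi_pos {s : ℂ} (hs : 0 < s.re) : 0 < (s / (2 * π)).re := by
  rw [← Complex.ofReal_ofNat, ← Complex.ofReal_mul, Complex.div_ofReal_re]
  positivity

/-- The elementary factor in the modular transformation of `1 / φ(e⁻ˢ)`; it describes the behaviour
of `1 / φ` near its dominant singularity `q = 1`. -/
noncomputable def cuspTerm (s : ℂ) : ℂ :=
  Complex.sqrt (s / (2 * π)) * cexp (π ^ 2 / 6 / s - s / 24)

/-- This is `η(-1 / τ) = √(τ / i) η(τ)` at `τ = i s / (2 π)`. -/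
theorem inv_eulerProd_exp_neg {s : ℂ} (hs : 0 < s.re) :
    (eulerProd (cexp (-s)))⁻¹ = cuspTerm s * (eulerProd (cexp (-(4 * π ^ 2 / s))))⁻¹ := by
  have hs₀ : s ≠ 0 := Complex.ne_zero_of_re_pos hs
  have hdiv := re_div_two_pi_pos hs
  have hinv : -1 / (I * (s / (2 * π))) = I * (4 * π ^ 2 / s / (2 * π)) := by
    field_simp
    rw [Complex.I_sq]
    ring
  have hmod := ModularForm.eta_comp_eq_csqrt_I_inv (x := I * (s / (2 * π)))
    (by simpa [UpperHalfPlane.upperHalfPlaneSet] using hdiv)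
  simp only [Function.comp_apply, Pi.smul_apply, Pi.mul_apply, smul_eq_mul] at hmod
  rw [hinv, eta_I_mul_div_two_pi, eta_I_mul_div_two_pi, csqrt_I_mul hdiv,
    mul_assoc (Complex.sqrt I), inv_mul_cancel_left₀ (csqrt_ne_zero Complex.I_ne_zero)] at hmod
  have hφ : eulerProd (cexp (-s)) ≠ 0 := eulerProd_ne_zero (norm_exp_neg_lt_one hs)
  have hφ' : eulerProd (cexp (-(4 * π ^ 2 / s))) ≠ 0 := by
    refine eulerProd_ne_zero (norm_exp_neg_lt_one ?_)
    exact_mod_cast re_ofReal_div_pos (show 0 < 4 * π ^ 2 by positivity) hs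
  have hexp : cexp (π ^ 2 / 6 / s - s / 24) =
      cexp (-s / 24) * (cexp (-(4 * π ^ 2 / s) / 24))⁻¹ := by
    rw [← Complex.exp_neg, ← Complex.exp_add]
    ring_nf
  rw [cuspTerm, hexp, ← div_eq_mul_inv, ← div_eq_mul_inv, eq_div_iff hφ', inv_mul_eq_div,
    div_eq_iff hφ, ← mul_div_assoc, div_mul_eq_mul_div, eq_div_iff (Complex.exp_ne_zero _)]
  linear_combination hmod

/-! ### The major arc -/

theorem re_ofReal_div_le {a : ℝ} (ha : 0 ≤ a) {s : ℂ} (hs : 0 < s.re) :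
    ((a : ℂ) / s).re ≤ a / s.re := by
  rw [re_ofReal_div, div_le_div_iff₀ (by positivity) hs]
  nlinarith [mul_nonneg ha (sq_nonneg s.im)]

theorem le_re_ofReal_div {a : ℝ} (ha : 0 ≤ a) {s : ℂ} (hs : 0 < s.re) (him : |s.im| ≤ s.re) :
    a / (2 * s.re) ≤ ((a : ℂ) / s).re := by
  have hsq : s.im ^ 2 ≤ s.re ^ 2 := sq_le_sq.2 (him.trans (le_abs_self _))
  rw [re_ofReal_div, div_le_div_iff₀ (by positivity) (by positivity)]
  nlinarith [mul_nonneg ha (sub_nonneg.2 hsq)]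

theorem norm_cuspTerm_le {s : ℂ} (hs : 0 < s.re) (hnorm : ‖s‖ ≤ 2 * π) :
    ‖cuspTerm s‖ ≤ rexp (π ^ 2 / 6 / s.re) := by
  have hsqrt : ‖Complex.sqrt (s / (2 * π))‖ ≤ 1 := by
    refine norm_csqrt_le_one ?_
    rw [norm_div, ← Complex.ofReal_ofNat, ← Complex.ofReal_mul,
      Complex.norm_of_nonneg two_pi_pos.le]
    exact div_le_one_of_le₀ hnorm two_pi_pos.le
  have hre : ((π ^ 2 / 6 : ℝ) / s - s / 24 : ℂ).re ≤ π ^ 2 / 6 / s.re := by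
    have h24 : (s / 24).re = s.re / 24 := by simp
    rw [Complex.sub_re, h24]
    linarith [re_ofReal_div_le (show 0 ≤ π ^ 2 / 6 by positivity) hs]
  push_cast at hre
  rw [cuspTerm, norm_mul, Complex.norm_exp]
  exact (mul_le_of_le_one_left (exp_pos _).le hsqrt).trans (exp_le_exp.2 hre)

theorem inv_eulerProd_sub_one_isBigO :
    (fun q => (eulerProd q)⁻¹ - 1) =O[𝓝 0] fun q => q := by
  have hzero : eulerProd 0 = 1 := by simp [eulerProd]
  have hdiff : DifferentiableAt ℂ eulerProd 0 :=
    ModularForm.differentiableOn_tprod_one_sub_pow.differentiableAt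
      (Metric.ball_mem_nhds 0 one_pos)
  simpa [hzero] using (hdiff.fun_inv (hzero ▸ one_ne_zero)).isBigO_sub

theorem tendsto_div_nhdsGT_zero {a : ℝ} (ha : 0 < a) :
    Tendsto (fun t => a / t) (𝓝[>] 0) atTop :=
  tendsto_inv_nhdsGT_zero.const_mul_atTop ha

theorem exists_norm_inv_eulerProd_sub_cuspTerm_le :
    ∃ C : ℝ, ∀ᶠ t in 𝓝[>] 0, ∀ s : ℂ, s.re = t → |s.im| ≤ t →
      ‖(eulerProd (cexp (-s)))⁻¹ - cuspTerm s‖ ≤ C * rexp (π ^ 2 / 6 / t - 2 * π ^ 2 / t) := by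
  obtain ⟨C, hC, hbound⟩ := inv_eulerProd_sub_one_isBigO.exists_pos
  obtain ⟨ε, hε, hball⟩ := Metric.eventually_nhds_iff.1 hbound.bound
  refine ⟨C, ?_⟩
  have hsmall : Tendsto (fun t => rexp (-(2 * π ^ 2 / t))) (𝓝[>] 0) (𝓝 0) :=
    tendsto_exp_neg_atTop_nhds_zero.comp (tendsto_div_nhdsGT_zero (by positivity))
  filter_upwards [self_mem_nhdsWithin, hsmall.eventually_lt_const hε,
    Ioc_mem_nhdsGT (zero_lt_one (α := ℝ))] with t (ht : 0 < t) htε ht₁ s hst him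
  subst hst
  have hnorm : ‖s‖ ≤ 2 * π := (Complex.norm_le_abs_re_add_abs_im s).trans
    (by rw [abs_of_pos ht]; linarith [ht₁.2, pi_gt_three])
  have hq : ‖cexp (-(4 * π ^ 2 / s))‖ ≤ rexp (-(2 * π ^ 2 / s.re)) := by
    rw [Complex.norm_exp, exp_le_exp, Complex.neg_re, neg_le_neg_iff]
    have hle := le_re_ofReal_div (show 0 ≤ 4 * π ^ 2 by positivity) ht him
    calc 2 * π ^ 2 / s.re = 4 * π ^ 2 / (2 * s.re) := by field_simp; norm_num
      _ ≤ (4 * π ^ 2 / s : ℂ).re := by exact_mod_cast hle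
  rw [inv_eulerProd_exp_neg ht, ← mul_sub_one, norm_mul, sub_eq_add_neg (π ^ 2 / 6 / s.re),
    exp_add, mul_left_comm]
  refine mul_le_mul (norm_cuspTerm_le ht hnorm) ?_ (norm_nonneg _) (exp_pos _).le
  exact (hball (by simpa using hq.trans_lt htε)).trans (by gcongr)

/-! ### The minor arc -/

theorem norm_one_sub_exp_neg_sq (s : ℂ) :
    ‖1 - cexp (-s)‖ ^ 2 = (1 - rexp (-s.re)) ^ 2 + 2 * rexp (-s.re) * (1 - cos s.im) := by
  rw [Complex.sq_norm, Complex.normSq_apply]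
  simp only [Complex.sub_re, Complex.sub_im, Complex.exp_re, Complex.exp_im, Complex.neg_re,
    Complex.neg_im, cos_neg, sin_neg, Complex.one_re, Complex.one_im]
  linear_combination rexp (-s.re) ^ 2 * sin_sq_add_cos_sq s.im

theorem one_sub_exp_neg_re_le_norm {s : ℂ} (hs₀ : 0 < s.re) (hs : s.re ≤ 1 / 2)
    (him : s.re ≤ |s.im|) (hπ : |s.im| ≤ π) :
    12 / 11 * (1 - rexp (-s.re)) ≤ ‖1 - cexp (-s)‖ := by
  have hr : 1 - s.re ≤ rexp (-s.re) := one_sub_le_exp_neg _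
  have hr₀ : 0 ≤ 1 - rexp (-s.re) := by simpa using hs₀.le
  have hcos : 1 / 5 * (1 - rexp (-s.re)) ^ 2 ≤ 1 - cos s.im := by
    have hπ₂ : 1 / 5 ≤ 2 / π ^ 2 := by
      rw [div_le_div_iff₀ (by norm_num) (by positivity)]
      nlinarith [pi_lt_d2, pi_pos]
    calc 1 / 5 * (1 - rexp (-s.re)) ^ 2 ≤ 2 / π ^ 2 * |s.im| ^ 2 := by gcongr; linarith
      _ ≤ 1 - cos s.im := by rw [sq_abs]; linarith [cos_le_one_sub_mul_cos_sq hπ]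
  refine le_of_sq_le_sq ?_ (norm_nonneg _)
  rw [norm_one_sub_exp_neg_sq]
  nlinarith [sq_nonneg (1 - rexp (-s.re))]

theorem exists_norm_inv_eulerProd_exp_neg_le :
    ∃ C : ℝ, ∀ᶠ t : ℝ in 𝓝[>] 0, ‖(eulerProd (rexp (-t)))⁻¹‖ ≤ C * rexp (π ^ 2 / 6 / t) := by
  obtain ⟨C, hC⟩ := exists_norm_inv_eulerProd_sub_cuspTerm_le
  refine ⟨|C| + 1, ?_⟩
  filter_upwards [hC, Ioc_mem_nhdsGT (zero_lt_one (α := ℝ))] with t hbound ⟨ht, ht₁⟩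
  have hsub := hbound t (Complex.ofReal_re t) (by simpa using ht.le)
  have hcusp : ‖cuspTerm t‖ ≤ rexp (π ^ 2 / 6 / t) := by
    simpa using norm_cuspTerm_le (s := t) ht
      (by rw [Complex.norm_of_nonneg ht.le]; linarith [pi_gt_three])
  have hexp : C * rexp (π ^ 2 / 6 / t - 2 * π ^ 2 / t) ≤ |C| * rexp (π ^ 2 / 6 / t) := by
    gcongr
    · exact le_abs_self C
    · exact sub_le_self _ (by positivity)
  push_cast
  linarith [norm_le_norm_sub_add (eulerProd (cexp (-t)))⁻¹ (cuspTerm t)]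

theorem exists_norm_inv_eulerProd_le_of_le_abs_im :
    ∃ C : ℝ, ∀ᶠ t in 𝓝[>] 0, ∀ s : ℂ, s.re = t → t ≤ |s.im| → |s.im| ≤ π →
      ‖(eulerProd (cexp (-s)))⁻¹‖ ≤ C * rexp (π ^ 2 / 6 / t - 1 / 60 / t) := by
  obtain ⟨C, hC⟩ := exists_norm_inv_eulerProd_exp_neg_le
  refine ⟨C, ?_⟩
  filter_upwards [hC, Ioc_mem_nhdsGT (one_half_pos (α := ℝ))] with t hreal ⟨ht, ht₂⟩ s hst him hπ
  subst hst
  have hnorm : ‖cexp (-s)‖ = rexp (-s.re) := by simp [Complex.norm_exp]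
  have hr₀ : 0 < 1 - rexp (-s.re) := by simpa using ht
  have hr : 1 - rexp (-s.re) ≤ s.re := by linarith [one_sub_le_exp_neg s.re]
  have hfar : ‖1 - cexp (-s)‖⁻¹ ≤ 11 / 12 * (1 - rexp (-s.re))⁻¹ := by
    refine (inv_anti₀ (by positivity) (one_sub_exp_neg_re_le_norm ht ht₂ him hπ)).trans_eq ?_
    rw [mul_inv]
    norm_num
  have hgain : 1 / 60 / s.re ≤ 1 / 5 * ((1 - rexp (-s.re))⁻¹ - ‖1 - cexp (-s)‖⁻¹) := by
    rw [div_eq_mul_inv]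
    linarith [inv_anti₀ hr₀ hr]
  calc ‖(eulerProd (cexp (-s)))⁻¹‖
      ≤ ‖(eulerProd (rexp (-s.re)))⁻¹‖ *
        rexp (-(1 / 5) * ((1 - rexp (-s.re))⁻¹ - ‖1 - cexp (-s)‖⁻¹)) := by
        simpa only [hnorm] using norm_inv_eulerProd_le (norm_exp_neg_lt_one ht)
    _ ≤ C * rexp (π ^ 2 / 6 / s.re) * rexp (-(1 / 60 / s.re)) := by
        refine mul_le_mul hreal (exp_le_exp.2 ?_) (exp_pos _).le ((norm_nonneg _).trans hreal)
        linarith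
    _ = C * rexp (π ^ 2 / 6 / s.re - 1 / 60 / s.re) := by
        rw [mul_assoc, ← exp_add, sub_eq_add_neg]

/-! ### Incomplete Gaussian integrals in the complex plane -/

theorem hasDerivAt_mul_integral_radial {f : ℂ → ℂ} (hf : Differentiable ℂ f) (u : ℂ) :
    HasDerivAt (fun u => u * ∫ r in (0 : ℝ)..1, f (r * u)) (f u) u := by
  obtain ⟨H, hH₀, hH⟩ := hf.isExactOn_univ.with_val_at 0 0
  suffices H = fun u => u * ∫ r in (0 : ℝ)..1, f (r * u) from this ▸ hH u (Set.mem_univ u)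
  ext v
  have hderiv (r : ℝ) : HasDerivAt (fun r : ℝ => H (r * v)) (f (r * v) * v) r := by
    have hray : HasDerivAt (fun r : ℝ => (r : ℂ) * v) v r := by
      simpa using (Complex.ofRealCLM.hasDerivAt (x := r)).mul_const v
    exact (hH (r * v) (Set.mem_univ _)).comp r hray
  have hftc := intervalIntegral.integral_eq_sub_of_hasDerivAt (a := 0) (b := 1)
    (fun r _ => hderiv r) (Continuous.intervalIntegrable (by have := hf.continuous; fun_prop) _ _)
  rw [intervalIntegral.integral_mul_const] at hftc
  simpa [hH₀, mul_comm] using hftc.symm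

/-- The primitive of `exp (c u²)` that vanishes at the origin, as an integral along a ray. -/
noncomputable def gaussPrim (c : ℝ) (u : ℂ) : ℂ :=
  u * ∫ r in (0 : ℝ)..1, cexp (c * (r * u) ^ 2)

theorem hasDerivAt_gaussPrim (c : ℝ) (u : ℂ) :
    HasDerivAt (gaussPrim c) (cexp (c * u ^ 2)) u :=
  hasDerivAt_mul_integral_radial (f := fun u => cexp (c * u ^ 2)) (by fun_prop) u

theorem norm_gaussPrim_le {c : ℝ} (hc : 0 ≤ c) {u : ℂ} (hu : 0 ≤ (u ^ 2).re) :
    ‖gaussPrim c u‖ ≤ ‖u‖ * rexp (c * (u ^ 2).re) := by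
  rw [gaussPrim, norm_mul]
  gcongr
  suffices ‖∫ r in (0 : ℝ)..1, cexp (c * (r * u) ^ 2)‖ ≤ rexp (c * (u ^ 2).re) * |1 - 0| by
    simpa using this
  refine intervalIntegral.norm_integral_le_of_norm_le_const fun r hr => ?_
  rw [Set.uIoc_of_le zero_le_one] at hr
  have hre : (c * (r * u) ^ 2 : ℂ).re = c * (r ^ 2 * (u ^ 2).re) := by
    rw [Complex.re_ofReal_mul, mul_pow, ← Complex.ofReal_pow, Complex.re_ofReal_mul]
  rw [Complex.norm_exp, exp_le_exp, hre]
  gcongr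
  exact mul_le_of_le_one_left hu (pow_le_one₀ hr.1.le hr.2)

theorem norm_integral_Ioi_one_gaussian_le {b : ℂ} (hb : 1 ≤ b.re) :
    ‖∫ x in Set.Ioi (1 : ℝ), cexp (-b * x ^ 2)‖ ≤ rexp (1 - b.re) := by
  have hint : MeasureTheory.Integrable fun x : ℝ => rexp (1 - b.re) * rexp (-1 * x ^ 2) :=
    (integrable_exp_neg_mul_sq one_pos).const_mul _
  have hsqrt : √π / 2 ≤ 1 := by
    rw [div_le_one two_pos, sqrt_le_left two_pos.le]
    linarith [pi_le_four]
  calc ‖∫ x in Set.Ioi (1 : ℝ), cexp (-b * x ^ 2)‖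
      ≤ ∫ x in Set.Ioi (1 : ℝ), rexp (1 - b.re) * rexp (-1 * x ^ 2) := by
        refine MeasureTheory.norm_integral_le_of_norm_le hint.integrableOn ?_
        filter_upwards [MeasureTheory.ae_restrict_mem measurableSet_Ioi] with x (hx : 1 < x)
        rw [norm_cexp_neg_mul_sq, ← exp_add, exp_le_exp]
        nlinarith [mul_nonneg (sub_nonneg.2 hb) (sub_nonneg.2 (one_le_pow₀ hx.le (n := 2)))]
    _ ≤ ∫ x in Set.Ioi (0 : ℝ), rexp (1 - b.re) * rexp (-1 * x ^ 2) :=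
        MeasureTheory.setIntegral_mono_set hint.integrableOn (.of_forall fun x => by positivity)
          (Set.Ioi_subset_Ioi zero_le_one).eventuallyLE
    _ = rexp (1 - b.re) * (√π / 2) := by
        rw [MeasureTheory.integral_const_mul, integral_gaussian_Ioi, div_one]
    _ ≤ rexp (1 - b.re) := mul_le_of_le_one_right (exp_pos _).le hsqrt

theorem norm_gaussPrim_sub_le {c : ℝ} (hc : 0 < c) {u z : ℂ} (hu : u ^ 2 = -z⁻¹)
    (hz : 1 ≤ c * z⁻¹.re) :
    ‖gaussPrim c u - u * (√(π / c) * Complex.sqrt z / 2)‖ ≤ ‖u‖ * rexp (1 - c * z⁻¹.re) := by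
  have hz₀ : z ≠ 0 := by
    rintro rfl
    norm_num at hz
  have hre : (c * z⁻¹ : ℂ).re = c * z⁻¹.re := Complex.re_ofReal_mul _ _
  have hexp (r : ℝ) : cexp (c * (r * u) ^ 2) = cexp (-(c * z⁻¹) * r ^ 2) := by
    rw [mul_pow, hu]
    ring_nf
  have hsqrt : (π / (c * z⁻¹) : ℂ) ^ (1 / 2 : ℂ) = √(π / c) * Complex.sqrt z := by
    rw [← csqrt_ofReal_mul (by positivity) hz₀, Complex.sqrt, one_div]
    push_cast
    congr 1
    field_simp
  have hint := integrable_cexp_neg_mul_sq (b := c * z⁻¹) (by linarith)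
  have hsplit := intervalIntegral.integral_interval_add_Ioi (a := 0) (b := 1)
    hint.integrableOn hint.integrableOn
  rw [integral_gaussian_complex_Ioi (by linarith), hsqrt] at hsplit
  simp_rw [gaussPrim, hexp]
  rw [← mul_sub, norm_mul, ← hsplit, sub_add_cancel_left, norm_neg, ← hre]
  gcongr
  exact norm_integral_Ioi_one_gaussian_le (hz.trans_eq hre.symm)

/-! ### The saddle point integral -/

/-- A primitive of `w² exp (c (w² + w⁻²))`. It is obtained from the exponents
`w² + w⁻² = (w - w⁻¹)² + 2 = (w + w⁻¹)² - 2`, after an integration by parts. -/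
noncomputable def saddlePrim (c : ℝ) (w : ℂ) : ℂ :=
  w * cexp (c * (w ^ 2 + w⁻¹ ^ 2)) / (2 * c) +
    (1 / 2 - 1 / (4 * c) : ℝ) * (rexp (2 * c) * gaussPrim c (w - w⁻¹)) -
    (1 / 2 + 1 / (4 * c) : ℝ) * (rexp (-(2 * c)) * gaussPrim c (w + w⁻¹))

theorem hasDerivAt_saddlePrim {c : ℝ} (hc : c ≠ 0) {w : ℂ} (hw : w ≠ 0) :
    HasDerivAt (saddlePrim c) (w ^ 2 * cexp (c * (w ^ 2 + w⁻¹ ^ 2))) w := by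
  have hc' : (c : ℂ) ≠ 0 := by exact_mod_cast hc
  have hid := hasDerivAt_id' w
  have hinv := hasDerivAt_inv hw
  have hexp := (hid.mul (((hid.pow 2).add (hinv.pow 2)).const_mul (c : ℂ)).cexp).div_const
    (2 * (c : ℂ))
  have hsub := (((hasDerivAt_gaussPrim c (w - w⁻¹)).comp w (hid.sub hinv)).const_mul
    (rexp (2 * c) : ℂ)).const_mul ((1 / 2 - 1 / (4 * c) : ℝ) : ℂ)
  have hadd := (((hasDerivAt_gaussPrim c (w + w⁻¹)).comp w (hid.add hinv)).const_mul
    (rexp (-(2 * c)) : ℂ)).const_mul ((1 / 2 + 1 / (4 * c) : ℝ) : ℂ)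
  refine ((hexp.add hsub).sub hadd).congr_deriv ?_
  have hsub' : (rexp (2 * c) : ℂ) * (cexp (c * (w - w⁻¹) ^ 2) * (1 - -(w ^ 2)⁻¹)) =
      cexp (c * (w ^ 2 + w⁻¹ ^ 2)) * (1 + (w ^ 2)⁻¹) := by
    rw [← mul_assoc, Complex.ofReal_exp, ← Complex.exp_add, sub_neg_eq_add]
    congr 2
    push_cast
    field_simp
    ring
  have hadd' : (rexp (-(2 * c)) : ℂ) * (cexp (c * (w + w⁻¹) ^ 2) * (1 + -(w ^ 2)⁻¹)) =
      cexp (c * (w ^ 2 + w⁻¹ ^ 2)) * (1 - (w ^ 2)⁻¹) := by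
    rw [← mul_assoc, Complex.ofReal_exp, ← Complex.exp_add, ← sub_eq_add_neg]
    congr 2
    push_cast
    field_simp
    ring
  rw [hsub', hadd']
  simp only [Pi.pow_apply, Pi.add_apply]
  push_cast
  field_simp
  ring

section Endpoint

/-! The points `z = 1 ± i`, at which `Re (z + z⁻¹) = 3 / 2` is smaller than the value `2` at the
saddle point `z = 1`. -/

variable {z : ℂ}

theorem inv_eq_one_sub_half (hre : z.re = 1) (him : z.im ^ 2 = 1) : z⁻¹ = 1 - z / 2 := by
  refine (eq_inv_of_mul_eq_one_right ?_).symm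
  apply Complex.ext <;> simp [hre] <;> nlinarith

theorem norm_csqrt_mem_Icc (hre : z.re = 1) (him : z.im ^ 2 = 1) :
    ‖Complex.sqrt z‖ ∈ Set.Icc (1 : ℝ) 2 := by
  have hpow : ‖Complex.sqrt z‖ ^ 4 = 2 := by
    calc ‖Complex.sqrt z‖ ^ 4 = ‖Complex.sqrt z ^ 2‖ ^ 2 := by rw [norm_pow]; ring
      _ = z.re ^ 2 + z.im ^ 2 := by rw [csqrt_sq, Complex.sq_norm, Complex.normSq_apply]; ring
      _ = 2 := by rw [hre, him]; norm_num
  constructor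
  · exact (one_le_pow_iff_of_nonneg (norm_nonneg _) four_ne_zero).1 (by linarith)
  · exact (pow_le_pow_iff_left₀ (norm_nonneg _) two_pos.le four_ne_zero).1 (by linarith)

theorem norm_csqrt_inv_le_one (hre : z.re = 1) (him : z.im ^ 2 = 1) :
    ‖(Complex.sqrt z)⁻¹‖ ≤ 1 := by
  rw [norm_inv]
  exact inv_le_one_of_one_le₀ (norm_csqrt_mem_Icc hre him).1

variable {c : ℝ}

theorem norm_csqrt_mul_exp_div_le (hc : 2 ≤ c) (hre : z.re = 1) (him : z.im ^ 2 = 1) :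
    ‖Complex.sqrt z * cexp (c * (z + z⁻¹)) / (2 * c)‖ ≤ rexp (3 / 2 * c) := by
  have hexp : (c * (z + z⁻¹) : ℂ).re = 3 / 2 * c := by
    rw [Complex.re_ofReal_mul, inv_eq_one_sub_half hre him]
    simp [hre]
    ring
  have hden : ‖(2 * c : ℂ)‖ = 2 * c := by
    rw [norm_mul, Complex.norm_ofNat, Complex.norm_of_nonneg (by linarith)]
  rw [norm_div, norm_mul, Complex.norm_exp, hexp, hden, div_le_iff₀ (by linarith), mul_comm]
  gcongr
  linarith [(norm_csqrt_mem_Icc hre him).2]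

theorem norm_exp_mul_gaussPrim_sub_le (hc : 2 ≤ c) (hre : z.re = 1) (him : z.im ^ 2 = 1) :
    ‖rexp (2 * c) * gaussPrim c (Complex.sqrt z - (Complex.sqrt z)⁻¹) -
      rexp (2 * c) * ((z - 1) / 2 * √(π / c))‖ ≤ 10 * rexp (3 / 2 * c) := by
  have hw : Complex.sqrt z ≠ 0 := norm_pos_iff.1 (by linarith [(norm_csqrt_mem_Icc hre him).1])
  have hinv := inv_eq_one_sub_half hre him
  have hinv_re : z⁻¹.re = 1 / 2 := by rw [hinv]; simp [hre]; norm_num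
  set w := Complex.sqrt z
  have hsq : (w - w⁻¹) ^ 2 = -z⁻¹ := by
    rw [sub_sq, inv_pow, mul_assoc, mul_inv_cancel₀ hw, csqrt_sq, hinv]
    ring
  have hmain : (z - 1) / 2 * √(π / c) = (w - w⁻¹) * (√(π / c) * w / 2) := by
    linear_combination √(π / c) / 2 * (mul_inv_cancel₀ hw - (csqrt_sq z : w ^ 2 = z))
  have hnorm : ‖w - w⁻¹‖ ≤ 3 := (norm_sub_le _ _).trans
    (by linarith [(norm_csqrt_mem_Icc hre him).2, norm_csqrt_inv_le_one hre him])
  rw [← mul_sub, hmain, norm_mul, Complex.norm_of_nonneg (exp_pos _).le]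
  have hgauss := norm_gaussPrim_sub_le (c := c) (by linarith) hsq (by rw [hinv_re]; linarith)
  rw [hinv_re] at hgauss
  calc rexp (2 * c) * ‖gaussPrim c (w - w⁻¹) - (w - w⁻¹) * (√(π / c) * w / 2)‖
      ≤ rexp (2 * c) * (3 * rexp (1 - c * (1 / 2))) := by grw [hgauss, hnorm]
    _ = 3 * rexp 1 * rexp (3 / 2 * c) := by
        rw [mul_left_comm, ← exp_add, mul_assoc, ← exp_add]
        ring_nf
    _ ≤ 10 * rexp (3 / 2 * c) := by
        gcongr
        linarith [exp_one_lt_d9]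

theorem norm_exp_neg_mul_gaussPrim_le (hc : 0 ≤ c) (hre : z.re = 1) (him : z.im ^ 2 = 1) :
    ‖rexp (-(2 * c)) * gaussPrim c (Complex.sqrt z + (Complex.sqrt z)⁻¹)‖ ≤
      3 * rexp (3 / 2 * c) := by
  have hw : Complex.sqrt z ≠ 0 := norm_pos_iff.1 (by linarith [(norm_csqrt_mem_Icc hre him).1])
  set w := Complex.sqrt z
  have hsq : ((w + w⁻¹) ^ 2).re = 7 / 2 := by
    rw [add_sq, inv_pow, mul_assoc, mul_inv_cancel₀ hw, csqrt_sq, inv_eq_one_sub_half hre him]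
    simp [hre]
    norm_num
  have hnorm : ‖w + w⁻¹‖ ≤ 3 := (norm_add_le _ _).trans
    (by linarith [(norm_csqrt_mem_Icc hre him).2, norm_csqrt_inv_le_one hre him])
  have hgauss := norm_gaussPrim_le hc (u := w + w⁻¹) (by rw [hsq]; norm_num)
  rw [norm_mul, Complex.norm_of_nonneg (exp_pos _).le]
  calc rexp (-(2 * c)) * ‖gaussPrim c (w + w⁻¹)‖
      ≤ rexp (-(2 * c)) * (3 * rexp (c * (7 / 2))) := by grw [hgauss, hsq, hnorm]
    _ = 3 * rexp (3 / 2 * c) := by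
        rw [mul_left_comm, ← exp_add]
        ring_nf

theorem norm_saddlePrim_csqrt_sub_le (hc : 2 ≤ c) (hre : z.re = 1) (him : z.im ^ 2 = 1) :
    ‖saddlePrim c (Complex.sqrt z) - (1 / 2 - 1 / (4 * c) : ℝ) *
      (rexp (2 * c) * ((z - 1) / 2 * √(π / c)))‖ ≤ 9 * rexp (3 / 2 * c) := by
  have hcoeff : 0 < 1 / (4 * c) ∧ 1 / (4 * c) ≤ 1 / 8 :=
    ⟨by positivity, one_div_le_one_div_of_le (by norm_num) (by linarith)⟩
  have hsub : ‖((1 / 2 - 1 / (4 * c) : ℝ) : ℂ)‖ ≤ 1 / 2 := by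
    rw [Complex.norm_of_nonneg] <;> linarith
  have hadd : ‖((1 / 2 + 1 / (4 * c) : ℝ) : ℂ)‖ ≤ 1 := by
    rw [Complex.norm_of_nonneg] <;> linarith
  rw [saddlePrim, inv_pow, csqrt_sq, sub_right_comm, add_sub_assoc, ← mul_sub]
  refine (norm_sub_le _ _).trans ((add_le_add_left (norm_add_le _ _) _).trans ?_)
  rw [norm_mul, norm_mul]
  grw [hsub, hadd, norm_csqrt_mul_exp_div_le hc hre him, norm_exp_mul_gaussPrim_sub_le hc hre him,
    norm_exp_neg_mul_gaussPrim_le (by linarith) hre him]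
  linarith

end Endpoint

theorem one_add_ofReal_mul_I_ne_zero (y : ℝ) : (1 + y * I : ℂ) ≠ 0 := fun h => by
  simpa using congrArg Complex.re h

theorem hasDerivAt_csqrt_one_add_mul_I (y : ℝ) :
    HasDerivAt (fun y : ℝ => Complex.sqrt (1 + y * I)) (I / (2 * Complex.sqrt (1 + y * I))) y := by
  have hline : HasDerivAt (fun y : ℝ => 1 + (y : ℂ) * I) I y := by
    simpa using ((Complex.ofRealCLM.hasDerivAt (x := y)).mul_const I).const_add 1
  refine ((Complex.hasDerivAt_sqrt (.inl (by simp))).comp y hline).congr_deriv ?_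
  rw [Complex.sqrt, neg_div, Complex.cpow_neg, ← one_div (2 : ℂ)]
  field_simp

theorem norm_integral_saddle_sub_le {c : ℝ} (hc : 2 ≤ c) :
    ‖(∫ y in (-1 : ℝ)..1, Complex.sqrt (1 + y * I) * cexp (c * ((1 + y * I) + (1 + y * I)⁻¹))) -
      (√(π / c) * rexp (2 * c) * (1 - 1 / (2 * c)) : ℝ)‖ ≤ 36 * rexp (3 / 2 * c) := by
  have hderiv (y : ℝ) : HasDerivAt (fun y : ℝ => -2 * I * saddlePrim c (Complex.sqrt (1 + y * I)))
      (Complex.sqrt (1 + y * I) * cexp (c * ((1 + y * I) + (1 + y * I)⁻¹))) y := by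
    have hw := csqrt_ne_zero (one_add_ofReal_mul_I_ne_zero y)
    refine (((hasDerivAt_saddlePrim (by linarith) hw).comp y
      (hasDerivAt_csqrt_one_add_mul_I y)).const_mul (-2 * I)).congr_deriv ?_
    rw [inv_pow, csqrt_sq]
    nth_rw 1 [← csqrt_sq (1 + y * I)]
    generalize Complex.sqrt (1 + y * I) = w at hw ⊢
    field_simp
    linear_combination -Complex.I_sq
  have hcont : Continuous fun y : ℝ =>
      Complex.sqrt (1 + y * I) * cexp (c * ((1 + y * I) + (1 + y * I)⁻¹)) := by
    have hsqrt : Continuous fun y : ℝ => Complex.sqrt (1 + y * I) :=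
      continuous_iff_continuousAt.2 fun y => (hasDerivAt_csqrt_one_add_mul_I y).continuousAt
    have hinv : Continuous fun y : ℝ => (1 + y * I : ℂ)⁻¹ :=
      Continuous.inv₀ (by fun_prop) one_add_ofReal_mul_I_ne_zero
    fun_prop
  rw [intervalIntegral.integral_eq_sub_of_hasDerivAt (fun y _ => hderiv y)
    (hcont.intervalIntegrable _ _), ← mul_sub]
  set main := fun z : ℂ => (1 / 2 - 1 / (4 * c) : ℝ) * (rexp (2 * c) * ((z - 1) / 2 * √(π / c)))
  set P := fun y : ℝ => saddlePrim c (Complex.sqrt (1 + y * I)) - main (1 + y * I)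
  have hP {y : ℝ} (hy : y ^ 2 = 1) : ‖P y‖ ≤ 9 * rexp (3 / 2 * c) :=
    norm_saddlePrim_csqrt_sub_le hc (by simp) (by simpa using hy)
  have hsplit : -2 * I * (saddlePrim c (Complex.sqrt (1 + (1 : ℝ) * I)) -
      saddlePrim c (Complex.sqrt (1 + (-1 : ℝ) * I))) -
      (√(π / c) * rexp (2 * c) * (1 - 1 / (2 * c)) : ℝ) = -2 * I * (P 1 - P (-1)) := by
    simp only [P, main]
    push_cast
    linear_combination -(√(π / c) * cexp (2 * c) * (1 - 1 / (2 * c)) : ℂ) * Complex.I_sq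
  calc _ = 2 * ‖P 1 - P (-1)‖ := by rw [hsplit]; simp
    _ ≤ 2 * (9 * rexp (3 / 2 * c) + 9 * rexp (3 / 2 * c)) := by
        grw [norm_sub_le, hP (by norm_num), hP (by norm_num)]
    _ = 36 * rexp (3 / 2 * c) := by ring

/-! ### The circle integral at the saddle point -/

theorem mu_eq_of_saddle {x t : ℝ} (ht : 0 < t) (hx : (x - 1 / 24) * t = π ^ 2 / 6 / t) :
    mu x = π ^ 2 / 3 / t := by
  have hsq : 24 * x - 1 = (2 * π / t) ^ 2 := by
    field_simp at hx ⊢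
    linear_combination hx / 6
  rw [mu, hsq, sqrt_sq (by positivity)]
  ring

theorem integral_cuspTerm_mul_exp {x t : ℝ} (ht : 0 < t)
    (hx : (x - 1 / 24) * t = π ^ 2 / 6 / t) :
    ∫ θ in (-t)..t, cuspTerm (t + θ * I) * cexp (x * (t + θ * I)) =
      (t * √(t / (2 * π)) : ℝ) * ∫ y in (-1 : ℝ)..1, Complex.sqrt (1 + y * I) *
        cexp ((π ^ 2 / 6 / t : ℝ) * ((1 + y * I) + (1 + y * I)⁻¹)) := by
  have hx' : ((x - 1 / 24) * t : ℂ) = π ^ 2 / 6 / t := by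
    simpa using congrArg Complex.ofReal hx
  have hscale := intervalIntegral.smul_integral_comp_mul_left (a := -1) (b := 1)
    (fun θ : ℝ => cuspTerm (t + θ * I) * cexp (x * (t + θ * I))) t
  rw [mul_neg, mul_one] at hscale
  rw [← hscale, Complex.real_smul, Complex.ofReal_mul, mul_assoc,
    ← intervalIntegral.integral_const_mul (√(t / (2 * π)) : ℂ)]
  congr 1
  refine intervalIntegral.integral_congr fun y _ => ?_
  have hz := one_add_ofReal_mul_I_ne_zero y
  have hs : (t + (t * y : ℝ) * I : ℂ) = t * (1 + y * I) := by push_cast; ring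
  have hsqrt : t * (1 + y * I) / (2 * π) = (t / (2 * π) : ℝ) * (1 + y * I) := by
    push_cast
    ring
  have hexp : π ^ 2 / 6 / (t * (1 + y * I)) - t * (1 + y * I) / 24 + x * (t * (1 + y * I)) =
      (π ^ 2 / 6 / t : ℝ) * ((1 + y * I) + (1 + y * I)⁻¹) := by
    push_cast
    rw [← div_div]
    linear_combination (1 + y * I) * hx'
  simp only [cuspTerm, hs]
  rw [mul_assoc, ← Complex.exp_add, hexp, hsqrt, csqrt_ofReal_mul (by positivity) hz, mul_assoc]

theorem saddle_main_eq {x t : ℝ} (ht : 0 < t) (hx : (x - 1 / 24) * t = π ^ 2 / 6 / t) :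
    t * √(t / (2 * π)) * (√(π / (π ^ 2 / 6 / t)) * rexp (2 * (π ^ 2 / 6 / t)) *
      (1 - 1 / (2 * (π ^ 2 / 6 / t)))) = 2 * π * T x := by
  have hsqrt : √(t / (2 * π)) * √(π / (π ^ 2 / 6 / t)) = √3 * (t / π) := by
    rw [← sqrt_mul (by positivity), ← sqrt_sq (show 0 ≤ t / π by positivity),
      ← sqrt_mul (by norm_num)]
    congr 1
    field_simp
    norm_num
  have hmu : 2 * (π ^ 2 / 6 / t) = mu x := by
    rw [mu_eq_of_saddle ht hx]
    ring
  have hd : 2 * π * (d / mu x ^ 2) = √3 * (t / π) * t := by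
    have hthree : √3 ^ 2 = 3 := sq_sqrt (by norm_num)
    rw [mu_eq_of_saddle ht hx, d]
    field_simp
    linear_combination -6 * hthree
  rw [hmu, T]
  linear_combination t * rexp (mu x) * (1 - 1 / mu x) * hsqrt -
    rexp (mu x) * (1 - 1 / mu x) * hd

theorem norm_integral_cuspTerm_mul_exp_sub_le {x t : ℝ} (ht : 0 < t) (ht' : t ≤ 1 / 2)
    (hx : (x - 1 / 24) * t = π ^ 2 / 6 / t) :
    ‖(∫ θ in (-t)..t, cuspTerm (t + θ * I) * cexp (x * (t + θ * I))) - (2 * π * T x : ℝ)‖ ≤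
      36 * rexp (π ^ 2 / 4 / t) := by
  have hc : 2 ≤ π ^ 2 / 6 / t := by
    rw [div_div, le_div_iff₀ (by positivity)]
    nlinarith [pi_gt_three]
  have hsqrt : √(t / (2 * π)) ≤ 1 := by
    rw [sqrt_le_left zero_le_one, one_pow, div_le_one (by positivity)]
    linarith [pi_gt_three]
  have hscale : t * √(t / (2 * π)) ≤ 1 := mul_le_one₀ (by linarith) (sqrt_nonneg _) hsqrt
  rw [integral_cuspTerm_mul_exp ht hx, ← saddle_main_eq ht hx, Complex.ofReal_mul (t * √_),
    ← mul_sub, norm_mul, Complex.norm_of_nonneg (by positivity)]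
  calc _ ≤ 1 * (36 * rexp (3 / 2 * (π ^ 2 / 6 / t))) := by
        gcongr
        exact norm_integral_saddle_sub_le hc
    _ = 36 * rexp (π ^ 2 / 4 / t) := by ring_nf

theorem norm_integral_sub_integral_le {F M : ℝ → ℂ} (hF : Continuous F) (hM : Continuous M)
    {a b B : ℝ} (ha : 0 ≤ a) (hab : a ≤ b) (hmajor : ∀ θ, |θ| ≤ a → ‖F θ - M θ‖ ≤ B)
    (hminor : ∀ θ, a ≤ |θ| → |θ| ≤ b → ‖F θ‖ ≤ B) :
    ‖(∫ θ in (-b)..b, F θ) - ∫ θ in (-a)..a, M θ‖ ≤ 2 * b * B := by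
  have hint (u v : ℝ) := hF.intervalIntegrable (μ := MeasureTheory.volume) u v
  have hleft : ‖∫ θ in (-b)..(-a), F θ‖ ≤ B * |-a - -b| :=
    intervalIntegral.norm_integral_le_of_norm_le_const fun θ hθ => by
      rw [Set.uIoc_of_le (by linarith)] at hθ
      have habs : |θ| = -θ := abs_of_nonpos (by linarith [hθ.2])
      exact hminor θ (by linarith [hθ.2]) (by linarith [hθ.1])
  have hright : ‖∫ θ in a..b, F θ‖ ≤ B * |b - a| :=
    intervalIntegral.norm_integral_le_of_norm_le_const fun θ hθ => by
      rw [Set.uIoc_of_le hab] at hθ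
      have habs : |θ| = θ := abs_of_nonneg (by linarith [hθ.1])
      exact hminor θ (by linarith [hθ.1]) (by linarith [hθ.2])
  have hmiddle : ‖∫ θ in (-a)..a, F θ - M θ‖ ≤ B * |a - -a| :=
    intervalIntegral.norm_integral_le_of_norm_le_const fun θ hθ => by
      rw [Set.uIoc_of_le (by linarith)] at hθ
      exact hmajor θ (abs_le.2 ⟨hθ.1.le, hθ.2⟩)
  have hsplit : (∫ θ in (-b)..b, F θ) - ∫ θ in (-a)..a, M θ =
      (∫ θ in (-b)..(-a), F θ) + (∫ θ in (-a)..a, F θ - M θ) + ∫ θ in a..b, F θ := by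
    rw [intervalIntegral.integral_sub (hint _ _) (hM.intervalIntegrable _ _),
      ← intervalIntegral.integral_add_adjacent_intervals (hint (-b) (-a)) (hint (-a) b),
      ← intervalIntegral.integral_add_adjacent_intervals (hint (-a) a) (hint a b)]
    ring
  rw [abs_of_nonneg (by linarith)] at hleft hright hmiddle
  rw [hsplit]
  refine norm_add₃_le.trans ?_
  linarith

theorem continuous_comp_vertical {f : ℂ → ℂ} (hf : ∀ s : ℂ, 0 < s.re → ContinuousAt f s) {t : ℝ}
    (ht : 0 < t) : Continuous fun θ : ℝ => f (t + θ * I) :=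
  continuous_iff_continuousAt.2 fun θ =>
    (hf _ (by simpa using ht)).comp (f := fun θ : ℝ => (t + θ * I : ℂ)) (by fun_prop)

theorem continuousAt_cuspTerm {s : ℂ} (hs : 0 < s.re) : ContinuousAt cuspTerm s := by
  have hs₀ : s ≠ 0 := Complex.ne_zero_of_re_pos hs
  have hsqrt : ContinuousAt (fun s : ℂ => Complex.sqrt (s / (2 * π))) s :=
    (Complex.continuousAt_sqrt (.inl (re_div_two_pi_pos hs).le)).comp
      (f := fun s : ℂ => s / (2 * π)) (by fun_prop)
  unfold cuspTerm
  fun_prop (disch := assumption)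

theorem continuousAt_inv_eulerProd_exp_neg {s : ℂ} (hs : 0 < s.re) :
    ContinuousAt (fun s => (eulerProd (cexp (-s)))⁻¹) s := by
  have hq := norm_exp_neg_lt_one hs
  have hball : cexp (-s) ∈ Metric.ball (0 : ℂ) 1 := by simpa using hq
  refine ContinuousAt.inv₀ ?_ (eulerProd_ne_zero hq)
  exact ContinuousAt.comp (f := fun s => cexp (-s)) (g := eulerProd)
    (ModularForm.differentiableOn_tprod_one_sub_pow.continuousOn.continuousAt
      (Metric.isOpen_ball.mem_nhds hball)) (by fun_prop)

theorem exists_norm_integrand_le :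
    ∃ C : ℝ, ∀ᶠ t in 𝓝[>] 0, ∀ x : ℝ, (x - 1 / 24) * t = π ^ 2 / 6 / t →
      (∀ θ : ℝ, |θ| ≤ t → ‖((eulerProd (cexp (-(t + θ * I))))⁻¹ - cuspTerm (t + θ * I)) *
        cexp (x * (t + θ * I))‖ ≤ C * rexp ((π ^ 2 / 3 - 1 / 60) / t)) ∧
      ∀ θ : ℝ, t ≤ |θ| → |θ| ≤ π → ‖(eulerProd (cexp (-(t + θ * I))))⁻¹ *
        cexp (x * (t + θ * I))‖ ≤ C * rexp ((π ^ 2 / 3 - 1 / 60) / t) := by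
  obtain ⟨C₁, hC₁⟩ := exists_norm_inv_eulerProd_sub_cuspTerm_le
  obtain ⟨C₂, hC₂⟩ := exists_norm_inv_eulerProd_le_of_le_abs_im
  refine ⟨max |C₁| |C₂| * rexp 1, ?_⟩
  filter_upwards [hC₁, hC₂, Ioc_mem_nhdsGT (zero_lt_one (α := ℝ))]
    with t hmajor hminor ⟨ht, ht₁⟩ x hx
  have hre (θ : ℝ) : (t + θ * I : ℂ).re = t := by simp
  have him (θ : ℝ) : (t + θ * I : ℂ).im = θ := by simp
  have hexp (θ : ℝ) : ‖cexp (x * (t + θ * I))‖ ≤ rexp (π ^ 2 / 6 / t + 1) := by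
    rw [Complex.norm_exp, exp_le_exp, Complex.re_ofReal_mul, hre]
    linarith
  have hmul {z w : ℂ} (hz : ‖z‖ ≤ max |C₁| |C₂| * rexp (π ^ 2 / 6 / t - 1 / 60 / t))
      (hw : ‖w‖ ≤ rexp (π ^ 2 / 6 / t + 1)) :
      ‖z * w‖ ≤ max |C₁| |C₂| * rexp 1 * rexp ((π ^ 2 / 3 - 1 / 60) / t) := by
    calc ‖z * w‖ ≤ max |C₁| |C₂| * rexp (π ^ 2 / 6 / t - 1 / 60 / t) *
          rexp (π ^ 2 / 6 / t + 1) := by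
          grw [norm_mul, hz, hw]
      _ = max |C₁| |C₂| * rexp 1 * rexp ((π ^ 2 / 3 - 1 / 60) / t) := by
          rw [mul_assoc, mul_assoc, ← exp_add, ← exp_add]
          ring_nf
  have hgap : 1 / 60 / t ≤ 2 * π ^ 2 / t := by
    gcongr
    nlinarith [pi_gt_three]
  refine ⟨fun θ hθ => hmul ?_ (hexp θ), fun θ hθ hθ' => hmul ?_ (hexp θ)⟩
  · grw [hmajor _ (hre θ) (by rwa [him]), le_abs_self C₁, ← hgap, ← le_max_left]
  · grw [hminor _ (hre θ) (by rwa [him]) (by rwa [him]), le_abs_self C₂, ← le_max_right]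

theorem exists_abs_p_sub_T_le :
    ∃ C : ℝ, ∀ᶠ t in 𝓝[>] 0, ∀ n : ℕ, ((n : ℝ) - 1 / 24) * t = π ^ 2 / 6 / t →
      |p n - T n| ≤ C * rexp ((π ^ 2 / 3 - 1 / 60) / t) := by
  obtain ⟨C, hC⟩ := exists_norm_integrand_le
  refine ⟨C + 36, ?_⟩
  filter_upwards [hC, Ioc_mem_nhdsGT (half_pos (zero_lt_one (α := ℝ)))] with t hbound ⟨ht, ht'⟩ n hn
  obtain ⟨hmajor, hminor⟩ := hbound n hn
  have hcusp := norm_integral_cuspTerm_mul_exp_sub_le ht ht' hn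
  have harcs := norm_integral_sub_integral_le
    (continuous_comp_vertical (f := fun s => (eulerProd (cexp (-s)))⁻¹ * cexp ((n : ℝ) * s))
      (fun s hs => (continuousAt_inv_eulerProd_exp_neg hs).mul (by fun_prop)) ht)
    (continuous_comp_vertical (f := fun s => cuspTerm s * cexp ((n : ℝ) * s))
      (fun s hs => (continuousAt_cuspTerm hs).mul (by fun_prop)) ht)
    ht.le (by linarith [pi_gt_three]) (fun θ hθ => by simpa only [sub_mul] using hmajor θ hθ) hminor
  have hcoeff := integral_inv_eulerProd_mul_exp ht n
  simp only [Complex.ofReal_natCast] at harcs hcusp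
  rw [hcoeff] at harcs
  have hexp : rexp (π ^ 2 / 4 / t) ≤ rexp ((π ^ 2 / 3 - 1 / 60) / t) := by
    rw [exp_le_exp, div_le_div_iff_of_pos_right ht]
    nlinarith [pi_gt_three]
  have hnorm : ‖(2 * π * p n - (2 * π * T n : ℝ) : ℂ)‖ = 2 * π * |p n - T n| := by
    rw [← Complex.ofReal_ofNat, ← Complex.ofReal_mul, ← Complex.ofReal_mul, ← Complex.ofReal_sub,
      ← mul_sub, Complex.norm_real, norm_mul, norm_of_nonneg two_pi_pos.le, norm_eq_abs]
  have htri := (norm_sub_le_norm_sub_add_norm_sub _ _ _).trans (add_le_add harcs hcusp)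
  rw [hnorm] at htri
  refine le_of_mul_le_mul_left (htri.trans ?_) two_pi_pos
  nlinarith [pi_gt_three, exp_pos ((π ^ 2 / 3 - 1 / 60) / t)]

/-! ### Decay of the logarithmic error -/

theorem tendsto_mu_natCast : Tendsto (fun n : ℕ => mu n) atTop atTop :=
  (tendsto_sqrt_atTop.comp <| tendsto_atTop_add_const_right _ _ <|
    tendsto_natCast_atTop_atTop.const_mul_atTop (by norm_num)).const_mul_atTop (by positivity)

theorem sqrt_le_mu {x : ℝ} (hx : 1 ≤ x) : √x ≤ mu x := by
  have hmu : mu x = √((π / 6) ^ 2 * (24 * x - 1)) := by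
    rw [mu, sqrt_mul (by positivity), sqrt_sq (by positivity)]
  have hpi : 1 / 4 ≤ (π / 6) ^ 2 := by nlinarith [pi_gt_three]
  rw [hmu]
  gcongr
  nlinarith

theorem exp_mu_isBigO : (fun n : ℕ => rexp (mu n)) =O[atTop] fun n : ℕ => mu n ^ 2 * T n := by
  have hd : d ≠ 0 := by unfold d; positivity
  have hlim : Tendsto (fun n : ℕ => d * (1 - 1 / mu n)) atTop (𝓝 d) := by
    simpa using ((tendsto_const_nhds (x := (1 : ℝ))).sub
      (tendsto_mu_natCast.const_div_atTop 1)).const_mul d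
  refine (((hlim.inv₀ hd).isBigO_one ℝ).mul
    (Asymptotics.isBigO_refl (fun n : ℕ => mu n ^ 2 * T n) _)).congr' ?_ (by simp)
  filter_upwards [hlim.eventually_ne hd, tendsto_mu_natCast.eventually_gt_atTop 0] with n hn hmu
  rw [T, inv_mul_eq_iff_eq_mul₀ hn]
  field_simp

theorem p_sub_T_isBigO_exp :
    (fun n : ℕ => p n - T n) =O[atTop] fun n : ℕ => rexp (199 / 200 * mu n) := by
  obtain ⟨C, hC⟩ := exists_abs_p_sub_T_le
  have ht : Tendsto (fun n : ℕ => π ^ 2 / 3 / mu n) atTop (𝓝[>] 0) :=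
    tendsto_nhdsWithin_iff.2 ⟨tendsto_mu_natCast.const_div_atTop _,
      (tendsto_mu_natCast.eventually_gt_atTop 0).mono fun n hn => div_pos (by positivity) hn⟩
  refine .of_bound |C| ?_
  filter_upwards [ht.eventually hC, tendsto_mu_natCast.eventually_gt_atTop 0,
    eventually_ge_atTop 1] with n hbound hmu hn
  have hn' : (1 : ℝ) ≤ n := by exact_mod_cast hn
  have hsq : mu n ^ 2 = π ^ 2 / 36 * (24 * n - 1) := by
    rw [mu, mul_pow, sq_sqrt (by linarith)]
    ring
  have hsaddle : ((n : ℝ) - 1 / 24) * (π ^ 2 / 3 / mu n) = π ^ 2 / 6 / (π ^ 2 / 3 / mu n) := by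
    field_simp
    linear_combination -216 * hsq
  have hexp : (π ^ 2 / 3 - 1 / 60) / (π ^ 2 / 3 / mu n) ≤ 199 / 200 * mu n := by
    have hpi : π ^ 2 ≤ 10 := by nlinarith [pi_lt_d2, pi_pos]
    rw [div_div_eq_mul_div, div_le_iff₀ (by positivity)]
    nlinarith
  rw [norm_eq_abs, norm_of_nonneg (exp_pos _).le]
  grw [hbound n hsaddle, le_abs_self C, hexp]

theorem p_sub_T_isBigO_exp_mul_T :
    (fun n : ℕ => p n - T n) =O[atTop] fun n : ℕ => rexp (-(mu n / 300)) * T n := by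
  have hpow := ((isLittleO_pow_exp_pos_mul_atTop 2 (b := 1 / 600) (by norm_num)).comp_tendsto
    tendsto_mu_natCast).isBigO
  calc (fun n : ℕ => p n - T n)
      =O[atTop] fun n : ℕ => rexp (199 / 200 * mu n) := p_sub_T_isBigO_exp
    _ = fun n : ℕ => rexp (-(mu n / 200)) * rexp (mu n) := by
        ext n
        rw [← exp_add]
        ring_nf
    _ =O[atTop] fun n : ℕ => rexp (-(mu n / 200)) * (rexp (1 / 600 * mu n) * T n) :=
        (Asymptotics.isBigO_refl _ _).mul
          (exp_mu_isBigO.trans (hpow.mul (Asymptotics.isBigO_refl _ _)))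
    _ = fun n : ℕ => rexp (-(mu n / 300)) * T n := by
        ext n
        rw [← mul_assoc, ← exp_add]
        ring_nf

theorem p_div_T_sub_one_isBigO :
    (fun n : ℕ => p n / T n - 1) =O[atTop] fun n : ℕ => rexp (-(mu n / 300)) := by
  have hT : ∀ᶠ n : ℕ in atTop, T n ≠ 0 :=
    exp_mu_isBigO.eq_zero_imp.mono fun n hn hT => (exp_pos _).ne' (hn (by simp [hT]))
  refine (p_sub_T_isBigO_exp_mul_T.mul
    (Asymptotics.isBigO_refl (fun n : ℕ => (T n)⁻¹) _)).congr' ?_ ?_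
  · filter_upwards [hT] with n hn
    rw [sub_mul, mul_inv_cancel₀ hn, div_eq_mul_inv]
  · filter_upwards [hT] with n hn
    rw [mul_inv_cancel_right₀ hn]

theorem E_isBigO : E =O[atTop] fun n : ℕ => rexp (-(√n / 300)) := by
  have hexp : Tendsto (fun n : ℕ => rexp (-(mu n / 300))) atTop (𝓝 0) :=
    tendsto_exp_neg_atTop_nhds_zero.comp (tendsto_mu_natCast.atTop_div_const (by norm_num))
  have hratio : Tendsto (fun n : ℕ => p n / T n) atTop (𝓝 1) :=
    tendsto_sub_nhds_zero_iff.1 (p_div_T_sub_one_isBigO.trans_tendsto hexp)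
  have hlog : (fun n : ℕ => log (p n / T n)) =O[atTop] fun n : ℕ => p n / T n - 1 := by
    simpa [Function.comp_def] using
      (hasDerivAt_log one_ne_zero).isBigO_sub.comp_tendsto hratio
  have hmu : (fun n : ℕ => rexp (-(mu n / 300))) =O[atTop] fun n : ℕ => rexp (-(√n / 300)) := by
    refine .of_bound' ?_
    filter_upwards [eventually_ge_atTop 1] with n hn
    rw [norm_of_nonneg (exp_pos _).le, norm_of_nonneg (exp_pos _).le]
    grw [sqrt_le_mu (by exact_mod_cast hn)]
  exact (((tendsto_one_div_atTop_nhds_zero_nat (𝕜 := ℝ)).isBigO_one ℝ).mul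
    (hlog.trans (p_div_T_sub_one_isBigO.trans hmu))).congr_right fun n => one_mul _

theorem isBigO_second_difference {R : Type*} [SeminormedRing R] {a : ℕ → R} {g : ℕ → ℝ}
    (ha : a =O[atTop] g) (hg : Antitone g) (hg₀ : ∀ n, 0 ≤ g n) :
    (fun n => a (n + 1) + a (n - 1) - 2 * a n) =O[atTop] fun n => g (n - 1) := by
  have hle {m : ℕ → ℕ} (hm : ∀ n, n - 1 ≤ m n) : (fun n => g (m n)) =O[atTop] fun n => g (n - 1) :=
    .of_norm_le fun n => by
      rw [norm_of_nonneg (hg₀ _)]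
      exact hg (hm n)
  have hshift {m : ℕ → ℕ} (hm : ∀ n, n - 1 ≤ m n) :
      (fun n => a (m n)) =O[atTop] fun n => g (n - 1) :=
    (ha.comp_tendsto (tendsto_atTop_mono hm (tendsto_sub_atTop_nat 1))).trans (hle hm)
  exact ((hshift fun n => by omega).add (hshift fun _ => le_rfl)).sub
    ((hshift fun n => Nat.sub_le n 1).const_mul_left 2)

theorem tendsto_rpow_mul_exp_neg_mul_sqrt_atTop_nhds_zero (s : ℝ) {b : ℝ} (hb : 0 < b) :
    Tendsto (fun x => x ^ s * rexp (-b * √x)) atTop (𝓝 0) := by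
  refine ((tendsto_rpow_mul_exp_neg_mul_atTop_nhds_zero (2 * s) b hb).comp
    tendsto_sqrt_atTop).congr' ?_
  filter_upwards [eventually_ge_atTop 0] with x hx
  simp only [Function.comp_apply]
  rw [rpow_mul (sqrt_nonneg x), rpow_two, sq_sqrt hx]

theorem limit_second_difference_E_general (s : ℝ) :
    Tendsto (fun n : ℕ => ((n : ℝ) - 1) ^ s * (E (n + 1) + E (n - 1) - 2 * E n)) atTop (𝓝 0) := by
  have hdiff := isBigO_second_difference E_isBigO
    (fun m n hmn => by gcongr) (fun n => (exp_pos _).le)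
  have hdecay := (tendsto_rpow_mul_exp_neg_mul_sqrt_atTop_nhds_zero s (b := 1 / 300)
    (by norm_num)).comp (tendsto_natCast_atTop_atTop.comp (tendsto_sub_atTop_nat 1))
  refine ((Asymptotics.isBigO_refl (fun n : ℕ => ((n : ℝ) - 1) ^ s) atTop).mul hdiff).trans_tendsto
    (hdecay.congr' ?_)
  filter_upwards [eventually_ge_atTop 1] with n hn
  simp only [Function.comp_apply, Nat.cast_pred hn]
  ring_nf

theorem limit_second_difference_E :
    Tendsto (fun n : ℕ =>
        ((n : ℝ) - 1) ^ ((5 : ℝ) / 2) * (E (n + 1) + E (n - 1) - 2 * E n))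
      atTop (nhds 0) :=
  limit_second_difference_E_general _
end

section
/- For every integer n ≥ 40, B̃(n+1) + B̃(n-1) - 2·B̃(n) > 72π/((n+1)·(24n+23)^{3/2}) - 4·log(μ(n-1))/(n-1)³ - 2·log(n-1)/(n-1)³ + 3/(n-1)³, where B̃(m) = (1/m)·log T̃(m) - (1/m)·log m. -/
open Real Filter Topology

/-- `B̃(n) = (1/n)·log T̃(n) - (1/n)·log n`. -/
noncomputable def B (n : ℕ) : ℝ :=
  1 / (n : ℝ) * Real.log (T (n : ℝ)) - 1 / (n : ℝ) * Real.log (n : ℝ)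

/-!
The second difference of `f y / y` at `x` is
`(2 f(x) - x (f(x + 1) - f(x - 1)) + x² Δ²f(x)) / (x (x² - 1))`, and `B y = f y / y` with
`f = log d - 2 log μ + log (1 - 1 / μ) + μ - log`, so each summand of `f` can be treated on its own.
Since `μ²` is affine, the differences of `μ` are bounded algebraically, and `μ` itself accounts for
the term with `π`. If `L` is affine with slope `a`, then `log L(x ± 1) = log L(x) + log (1 ± t)`
with `t = a / L(x)`; as long as `t ≥ 1 / x`, the numerator belonging to `-log L` is at least
`3 - 2 log L(x)`. The two such summands, `-log μ²` and `-log`, contribute `6` in place of the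
required `3`. This surplus pays for `log (1 - 1 / μ)`, which costs at most `7 / 4`, for
`2 log d ≥ -2 / 9`, and for evaluating the logarithms at `x - 1` instead of `x`.
-/

/-- The central second difference of `f` with unit step. -/
def secondDiff (f : ℝ → ℝ) (x : ℝ) : ℝ := f (x + 1) + f (x - 1) - 2 * f x

/-- The function `B`, extended to real arguments. -/
noncomputable def realB (y : ℝ) : ℝ := (log (T y) - log y) / y

theorem secondDiff_div_self (f : ℝ → ℝ) {x : ℝ} (hx : 1 < x) :
    secondDiff (fun y ↦ f y / y) x =
      (2 * f x - x * (f (x + 1) - f (x - 1)) + x ^ 2 * secondDiff f x) / (x * (x ^ 2 - 1)) := by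
  have hx0 : x ≠ 0 := by linarith
  have hx1 : x - 1 ≠ 0 := by linarith
  have hx2 : x + 1 ≠ 0 := by linarith
  rw [show x ^ 2 - 1 = (x - 1) * (x + 1) by ring]
  simp only [secondDiff]
  field_simp
  ring

theorem secondDiff_const_div (a : ℝ) {x : ℝ} (hx : 1 < x) :
    secondDiff (fun y ↦ a / y) x = 2 * a / (x * (x ^ 2 - 1)) := by
  rw [secondDiff_div_self _ hx]
  unfold secondDiff
  ring

theorem mul_sq_sub_one_pos_of_one_lt {x : ℝ} (hx : 1 < x) : 0 < x * (x ^ 2 - 1) :=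
  mul_pos (by linarith) (by nlinarith)

theorem log_sub_log_le_sub_div {a b : ℝ} (ha : 0 < a) (hb : 0 < b) :
    log b - log a ≤ (b - a) / a := by
  rw [← log_div hb.ne' ha.ne', sub_div, div_self ha.ne']
  exact log_le_sub_one_of_pos (div_pos hb ha)

theorem two_mul_le_log_one_add_sub_log_one_sub {t : ℝ} (ht₀ : 0 ≤ t) (ht₁ : t < 1) :
    2 * t ≤ log (1 + t) - log (1 - t) := by
  have h := hasSum_log_sub_log_of_abs_lt_one (abs_lt.2 ⟨by linarith, ht₁⟩)
  simpa using le_hasSum h 0 fun k _ ↦ by positivity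

theorem log_one_add_add_log_one_sub_le {t : ℝ} (ht₀ : -1 < t) (ht₁ : t < 1) :
    log (1 + t) + log (1 - t) ≤ -t ^ 2 := by
  rw [← log_mul (by linarith) (by linarith)]
  linarith [log_le_sub_one_of_pos (mul_pos (by linarith : 0 < 1 + t) (sub_pos.2 ht₁))]

theorem le_secondDiff_neg_log_linear_div {a b x : ℝ} (ha : 0 < a) (hb : 0 ≤ b)
    (hx : a + b < a * x) :
    (3 - 2 * log (a * x - b)) / (x * (x ^ 2 - 1)) ≤
      secondDiff (fun y ↦ -log (a * y - b) / y) x := by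
  have hx1 : 1 < x := by nlinarith
  have hL : 0 < a * x - b := by linarith
  set t := a / (a * x - b) with ht
  have ht₀ : 0 ≤ t := by positivity
  have ht₁ : t < 1 := (div_lt_one hL).2 (by linarith)
  have hxt : 1 ≤ x * t := by
    rw [ht, ← mul_div_assoc, one_le_div hL]
    linarith
  have h_succ : log (a * (x + 1) - b) = log (a * x - b) + log (1 + t) := by
    rw [← log_mul hL.ne' (by linarith), ht]
    congr 1
    field_simp
    ring
  have h_pred : log (a * (x - 1) - b) = log (a * x - b) + log (1 - t) := by
    rw [← log_mul hL.ne' (by linarith), ht]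
    congr 1
    field_simp
    ring
  rw [secondDiff_div_self _ hx1]
  apply div_le_div_of_nonneg_right _ (mul_sq_sub_one_pos_of_one_lt hx1).le
  simp only [secondDiff, h_succ, h_pred]
  have h_first : 2 * (x * t) ≤ x * (log (1 + t) - log (1 - t)) := by
    linarith [mul_le_mul_of_nonneg_left (two_mul_le_log_one_add_sub_log_one_sub ht₀ ht₁)
      (by linarith : 0 ≤ x)]
  have h_second : x ^ 2 * (log (1 + t) + log (1 - t)) ≤ -(x * t) ^ 2 := by
    linarith [mul_le_mul_of_nonneg_left
      (log_one_add_add_log_one_sub_le (by linarith) ht₁) (sq_nonneg x)]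
  nlinarith

theorem one_sub_one_div_pos {t : ℝ} (ht : 1 < t) : 0 < 1 - 1 / t :=
  sub_pos.2 ((div_lt_one (by linarith)).2 ht)

theorem neg_log_one_sub_inv_le {t : ℝ} (ht : 1 < t) : -log (1 - 1 / t) ≤ 1 / (t - 1) := by
  have h := log_sub_log_le_sub_div (one_sub_one_div_pos ht) one_pos
  have ht₁ : t - 1 ≠ 0 := by linarith
  have h_eq : (1 - (1 - 1 / t)) / (1 - 1 / t) = 1 / (t - 1) := by
    field_simp
    ring
  rwa [log_one, zero_sub, h_eq] at h

/-- Positive reals `u ≤ v ≤ w` whose squares form an arithmetic progression with difference `c`,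
as do the squares of three consecutive values of `mu`. -/
structure SqProgression (c u v w : ℝ) : Prop where
  left_pos : 0 < u
  left_le_mid : u ≤ v
  mid_le_right : v ≤ w
  mid_sq : v ^ 2 = u ^ 2 + c
  right_sq : w ^ 2 = v ^ 2 + c

namespace SqProgression

variable {c u v w : ℝ}

theorem diff_nonneg (h : SqProgression c u v w) : 0 ≤ c := by
  have := pow_le_pow_left₀ h.left_pos.le h.left_le_mid 2
  linarith [h.mid_sq]

theorem mid_pos (h : SqProgression c u v w) : 0 < v := h.left_pos.trans_le h.left_le_mid

theorem right_pos (h : SqProgression c u v w) : 0 < w := h.mid_pos.trans_le h.mid_le_right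

theorem sq_mul_sq (h : SqProgression c u v w) : (u * w) ^ 2 = (v ^ 2) ^ 2 - c ^ 2 := by
  rw [mul_pow, h.right_sq, h.mid_sq]
  ring

theorem mul_le_mid_sq (h : SqProgression c u v w) : u * w ≤ v ^ 2 :=
  le_of_sq_le_sq (by linarith [h.sq_mul_sq, sq_nonneg c]) (sq_nonneg v)

theorem add_le_two_mul_mid (h : SqProgression c u v w) : u + w ≤ 2 * v := by
  refine le_of_sq_le_sq ?_ (by linarith [h.mid_pos])
  linarith [h.mid_sq, h.right_sq, h.mul_le_mid_sq]

theorem le_add_sq (h : SqProgression c u v w) : 4 * (v ^ 2 - c / 2) ≤ (u + w) ^ 2 := by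
  have := mul_le_mul_of_nonneg_left (h.left_le_mid.trans h.mid_le_right) h.left_pos.le
  linarith [h.mid_sq, h.right_sq]

theorem mid_sq_sub_pos (h : SqProgression c u v w) : 0 < v ^ 2 - c / 2 := by
  linarith [h.mid_sq, h.diff_nonneg, sq_pos_of_pos h.left_pos]

theorem right_sub_left_le (h : SqProgression c u v w) : w - u ≤ c * v / (v ^ 2 - c / 2) := by
  have h_prod : (w - u) * (u + w) = 2 * c := by linarith [h.mid_sq, h.right_sq]
  rw [le_div_iff₀ h.mid_sq_sub_pos]
  have h_sub : 0 ≤ w - u := by linarith [h.left_le_mid, h.mid_le_right]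
  have h_sum := mul_le_mul_of_nonneg_left h.add_le_two_mul_mid h.diff_nonneg
  linarith [mul_le_mul_of_nonneg_left h.le_add_sq h_sub, congrArg (· * (u + w)) h_prod]

theorem two_mul_mid_sub_add_le (h : SqProgression c u v w) :
    2 * v - (u + w) ≤ c ^ 2 * v / (4 * (v ^ 2 - c / 2) ^ 2) := by
  have hm := h.mid_sq_sub_pos
  have h_add : 0 < u + w := add_pos h.left_pos h.right_pos
  have h_sub : 0 ≤ 2 * v - (u + w) := by linarith [h.add_le_two_mul_mid]
  have h_prod : (2 * v - (u + w)) * (2 * v + (u + w)) * (u + w) ^ 2 = 4 * c ^ 2 := by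
    have h_sq : (u + w) ^ 2 = 2 * (v ^ 2 + u * w) := by linarith [h.mid_sq, h.right_sq]
    calc (2 * v - (u + w)) * (2 * v + (u + w)) * (u + w) ^ 2
        = (4 * v ^ 2 - (u + w) ^ 2) * (u + w) ^ 2 := by ring
      _ = 4 * ((v ^ 2) ^ 2 - (u * w) ^ 2) := by rw [h_sq]; ring
      _ = 4 * c ^ 2 := by rw [h.sq_mul_sq]; ring
  rw [le_div_iff₀ (by positivity)]
  have h_fourth : (4 * (v ^ 2 - c / 2)) ^ 2 ≤ ((u + w) ^ 2) ^ 2 := by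
    gcongr
    exact h.le_add_sq
  suffices (2 * v - (u + w)) * (4 * (v ^ 2 - c / 2)) ^ 2 ≤ 4 * (c ^ 2 * v) by linarith
  calc (2 * v - (u + w)) * (4 * (v ^ 2 - c / 2)) ^ 2
      ≤ (2 * v - (u + w)) * ((u + w) ^ 2) ^ 2 := by gcongr
    _ = (2 * v - (u + w)) * (2 * (u + w)) * (u + w) ^ 2 * ((u + w) / 2) := by ring
    _ ≤ (2 * v - (u + w)) * (2 * v + (u + w)) * (u + w) ^ 2 * ((u + w) / 2) := by
      gcongr
      linarith [h.add_le_two_mul_mid]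
    _ ≤ 4 * c ^ 2 * v := by
      rw [h_prod]
      gcongr
      linarith [h.add_le_two_mul_mid]
    _ = 4 * (c ^ 2 * v) := by ring

theorem log_one_sub_inv_sub_le (h : SqProgression c u v w) (hu : 1 < u) :
    log (1 - 1 / w) - log (1 - 1 / u) ≤ c / (u * (u - 1)) / u := by
  have hc := h.diff_nonneg
  have hu₁ : 0 < u - 1 := by linarith
  have huw : u ≤ w := h.left_le_mid.trans h.mid_le_right
  have hw : 1 < w := hu.trans_le huw
  have h_sub : w - u ≤ c / u := by
    rw [le_div_iff₀ h.left_pos]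
    nlinarith [h.mid_sq, h.right_sq]
  calc log (1 - 1 / w) - log (1 - 1 / u)
      ≤ ((1 - 1 / w) - (1 - 1 / u)) / (1 - 1 / u) :=
        log_sub_log_le_sub_div (one_sub_one_div_pos hu) (one_sub_one_div_pos hw)
    _ = (w - u) / (w * (u - 1)) := by
      field_simp
      ring
    _ ≤ c / u / (u * (u - 1)) := by gcongr
    _ = c / (u * (u - 1)) / u := div_right_comm _ _ _

theorem mid_sq_sub_mul_le (h : SqProgression c u v w) : v ^ 2 - u * w ≤ c ^ 2 / v ^ 2 := by
  rw [le_div_iff₀ (pow_pos h.mid_pos 2)]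
  have := mul_nonneg (sub_nonneg.2 h.mul_le_mid_sq) (mul_pos h.left_pos h.right_pos).le
  linarith [h.sq_mul_sq]

theorem two_mul_log_one_sub_inv_sub_le (h : SqProgression c u v w) (hu : 1 < u) :
    2 * log (1 - 1 / v) - log (1 - 1 / u) - log (1 - 1 / w) ≤
      2 / u * (c / (u * (u - 1))) ^ 2 := by
  have hv : 1 < v := hu.trans_le h.left_le_mid
  have hw : 1 < w := hv.trans_le h.mid_le_right
  have hu₁ : 0 < u - 1 := by linarith
  have hw₁ : 0 < w - 1 := by linarith
  have hV := one_sub_one_div_pos hv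
  have hUW := mul_pos (one_sub_one_div_pos hu) (one_sub_one_div_pos hw)
  have h_num : u * w * (v - 1) ^ 2 - v ^ 2 * ((u - 1) * (w - 1)) ≤
      2 * v * (c ^ 2 / v ^ 2) := by
    have h_add := mul_le_mul_of_nonneg_left h.add_le_two_mul_mid (sq_nonneg v)
    nlinarith [h.mul_le_mid_sq, h.mid_sq_sub_mul_le]
  calc 2 * log (1 - 1 / v) - log (1 - 1 / u) - log (1 - 1 / w)
      = log ((1 - 1 / v) ^ 2) - log ((1 - 1 / u) * (1 - 1 / w)) := by
        rw [log_pow, log_mul (one_sub_one_div_pos hu).ne' (one_sub_one_div_pos hw).ne']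
        push_cast
        ring
    _ ≤ ((1 - 1 / v) ^ 2 - (1 - 1 / u) * (1 - 1 / w)) / ((1 - 1 / u) * (1 - 1 / w)) :=
        log_sub_log_le_sub_div hUW (pow_pos hV 2)
    _ = (u * w * (v - 1) ^ 2 - v ^ 2 * ((u - 1) * (w - 1))) /
          (v ^ 2 * ((u - 1) * (w - 1))) := by
        field_simp
    _ ≤ 2 * v * (c ^ 2 / v ^ 2) / (v ^ 2 * ((u - 1) * (w - 1))) := by gcongr
    _ = 2 * c ^ 2 / (v ^ 3 * ((u - 1) * (w - 1))) := by field_simp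
    _ ≤ 2 * c ^ 2 / (u ^ 3 * ((u - 1) * (u - 1))) := by
        have := h.left_le_mid
        have := h.mid_le_right
        gcongr
        linarith
    _ = 2 / u * (c / (u * (u - 1))) ^ 2 := by field_simp

end SqProgression

theorem mu_sq {y : ℝ} (hy : 1 / 24 ≤ y) : mu y ^ 2 = 2 * π ^ 2 / 3 * (y - 1 / 24) := by
  rw [mu, mul_pow, Real.sq_sqrt (by linarith)]
  ring

theorem mu_pos {y : ℝ} (hy : 1 / 24 < y) : 0 < mu y :=
  mul_pos (by positivity) (Real.sqrt_pos.2 (by linarith))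

theorem mu_mono : Monotone mu := fun y z hyz ↦ by
  unfold mu
  gcongr

theorem two_mul_log_mu {y : ℝ} (hy : 1 / 24 ≤ y) :
    2 * log (mu y) = log (2 * π ^ 2 / 3 * y - π ^ 2 / 36) := by
  rw [show 2 * π ^ 2 / 3 * y - π ^ 2 / 36 = mu y ^ 2 by rw [mu_sq hy]; ring, log_pow]
  norm_num

theorem sqProgression_mu {x : ℝ} (hx : 25 / 24 < x) :
    SqProgression (2 * π ^ 2 / 3) (mu (x - 1)) (mu x) (mu (x + 1)) where
  left_pos := mu_pos (by linarith)
  left_le_mid := mu_mono (by linarith)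
  mid_le_right := mu_mono (by linarith)
  mid_sq := by rw [mu_sq (by linarith), mu_sq (by linarith)]; ring
  right_sq := by rw [mu_sq (by linarith), mu_sq (by linarith)]; ring

theorem eleven_halves_le_mu {y : ℝ} (hy : 5 ≤ y) : 11 / 2 ≤ mu y := by
  refine le_of_sq_le_sq ?_ (mu_pos (by linarith)).le
  rw [mu_sq (by linarith)]
  nlinarith [pi_gt_d2]

theorem log_T {y : ℝ} (hy : 1 < mu y) :
    log (T y) = log d - 2 * log (mu y) + log (1 - 1 / mu y) + mu y := by
  have hd : d ≠ 0 := by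
    unfold d
    positivity
  have hmu : mu y ^ 2 ≠ 0 := by positivity
  have h_one_sub := (one_sub_one_div_pos hy).ne'
  rw [T, log_mul (by positivity) (exp_ne_zero _), log_mul (by positivity) h_one_sub,
    log_div hd hmu, log_pow, log_exp]
  norm_num

theorem three_quarters_mul_div_le_two_sub_div_sub_sq_div {x : ℝ} (hx : 3 ≤ x) :
    3 / 4 * (x * (x - 1)) / ((x + 23 / 24) * (x - 1 / 24)) ≤
      2 - x / (x - 13 / 24) - x ^ 2 / (4 * (x - 13 / 24) ^ 2) := by
  have h₀ : 0 < x - 1 / 24 := by linarith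
  have h₁ : 0 < x - 13 / 24 := by linarith
  have h_eq : ∀ z : ℝ, z ≠ 0 → 2 - x / z - x ^ 2 / (4 * z ^ 2) =
      (8 * z ^ 2 - 4 * x * z - x ^ 2) / (4 * z ^ 2) := by
    intro z hz
    field_simp
    ring
  rw [h_eq _ h₁.ne', div_le_div_iff₀ (by positivity) (by positivity)]
  obtain ⟨t, ht, rfl⟩ : ∃ t, 0 ≤ t ∧ x = t + 3 := ⟨x - 3, by linarith, by ring⟩
  rw [← sub_nonneg]
  ring_nf
  positivity

theorem seventy_two_mul_pi_div_eq {x : ℝ} (hx : -23 / 24 ≤ x) :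
    72 * π / ((x + 1) * (24 * x + 23) ^ ((3 : ℝ) / 2)) =
      3 / 4 * (2 * π ^ 2 / 3) ^ 2 / ((x + 1) * mu (x + 1) ^ 3) := by
  have h_pow : (24 * x + 23) ^ ((3 : ℝ) / 2) = √(24 * (x + 1) - 1) ^ 3 := by
    rw [show 24 * (x + 1) - 1 = 24 * x + 23 by ring, Real.sqrt_eq_rpow, ← Real.rpow_natCast,
      ← Real.rpow_mul (by linarith)]
    norm_num
  rw [h_pow, mu]
  field_simp
  norm_num

theorem seventy_two_mul_pi_div_le {x : ℝ} (hx : 25 / 24 < x) :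
    72 * π / ((x + 1) * (24 * x + 23) ^ ((3 : ℝ) / 2)) ≤
      mu x * (3 / 4 * (x * (x - 1)) / ((x + 23 / 24) * (x - 1 / 24))) / (x * (x ^ 2 - 1)) := by
  have h := sqProgression_mu hx
  have hv := h.mid_pos
  have hw := h.right_pos
  have hx₁ : 0 < x - 1 := by linarith
  have : 0 < x + 1 := by linarith
  rw [seventy_two_mul_pi_div_eq (by linarith)]
  calc 3 / 4 * (2 * π ^ 2 / 3) ^ 2 / ((x + 1) * mu (x + 1) ^ 3)
      = 3 / 4 * (2 * π ^ 2 / 3) ^ 2 / ((x + 1) * (mu (x + 1) ^ 2 * mu (x + 1))) := by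
        rw [pow_succ (mu _) 2]
    _ ≤ 3 / 4 * (2 * π ^ 2 / 3) ^ 2 / ((x + 1) * (mu (x + 1) ^ 2 * mu x)) := by
        gcongr
        exact h.mid_le_right
    _ = mu x * (3 / 4 * ((2 * π ^ 2 / 3) ^ 2 / (mu (x + 1) ^ 2 * mu x ^ 2))) / (x + 1) := by
        field_simp
    _ = mu x * (3 / 4 * (1 / ((x + 23 / 24) * (x - 1 / 24)))) / (x + 1) := by
        rw [mu_sq (by linarith), mu_sq (by linarith), mul_mul_mul_comm, ← sq,
          show x + 1 - 1 / 24 = x + 23 / 24 by ring, ← div_div, div_self (by positivity)]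
    _ = mu x * (3 / 4 * (x * (x - 1)) / ((x + 23 / 24) * (x - 1 / 24))) /
          (x * ((x - 1) * (x + 1))) := by
        have : x ≠ 0 := by linarith
        generalize (x + 23 / 24) * (x - 1 / 24) = q
        field_simp
    _ = _ := by ring_nf

theorem le_secondDiff_mu_div {x : ℝ} (hx : 3 ≤ x) :
    72 * π / ((x + 1) * (24 * x + 23) ^ ((3 : ℝ) / 2)) ≤ secondDiff (fun y ↦ mu y / y) x := by
  have h := sqProgression_mu (by linarith : 25 / 24 < x)
  have hv := h.mid_pos
  have h_mid : mu x ^ 2 - 2 * π ^ 2 / 3 / 2 = 2 * π ^ 2 / 3 * (x - 13 / 24) := by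
    rw [mu_sq (by linarith)]
    ring
  have : 0 < x - 13 / 24 := by linarith
  have hN := mul_sq_sub_one_pos_of_one_lt (by linarith : 1 < x)
  have h_first : x * (mu (x + 1) - mu (x - 1)) ≤ mu x * (x / (x - 13 / 24)) := by
    have h_le := mul_le_mul_of_nonneg_left h.right_sub_left_le (by linarith : 0 ≤ x)
    rw [h_mid] at h_le
    refine h_le.trans_eq ?_
    field_simp
  have h_second : x ^ 2 * (2 * mu x - (mu (x - 1) + mu (x + 1))) ≤
      mu x * (x ^ 2 / (4 * (x - 13 / 24) ^ 2)) := by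
    have h_le := mul_le_mul_of_nonneg_left h.two_mul_mid_sub_add_le (sq_nonneg x)
    rw [h_mid] at h_le
    refine h_le.trans_eq ?_
    field_simp
  refine (seventy_two_mul_pi_div_le (by linarith)).trans ?_
  rw [secondDiff_div_self _ (by linarith)]
  calc mu x * (3 / 4 * (x * (x - 1)) / ((x + 23 / 24) * (x - 1 / 24))) / (x * (x ^ 2 - 1))
      ≤ mu x * (2 - x / (x - 13 / 24) - x ^ 2 / (4 * (x - 13 / 24) ^ 2)) / (x * (x ^ 2 - 1)) := by
        gcongr
        exact three_quarters_mul_div_le_two_sub_div_sub_sq_div hx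
    _ ≤ _ := by
        gcongr
        unfold secondDiff
        linarith

theorem secondDiff_neg_log_one_sub_inv_mu_div_le {x : ℝ} (hx : 6 ≤ x) :
    secondDiff (fun y ↦ -log (1 - 1 / mu y) / y) x ≤ 7 / 4 / (x * (x ^ 2 - 1)) := by
  have h := sqProgression_mu (by linarith : 25 / 24 < x)
  have hu : 11 / 2 ≤ mu (x - 1) := eleven_halves_le_mu (by linarith)
  have hv : 11 / 2 ≤ mu x := eleven_halves_le_mu (by linarith)
  have hu_sq := mu_sq (by linarith : 1 / 24 ≤ x - 1)
  have h_zeroth : -log (1 - 1 / mu x) ≤ 2 / 9 := by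
    refine (neg_log_one_sub_inv_le (by linarith)).trans ?_
    rw [div_le_div_iff₀ (by linarith) (by norm_num)]
    linarith
  have h_first := h.log_one_sub_inv_sub_le (by linarith)
  have h_second := h.two_mul_log_one_sub_inv_sub_le (by linarith)
  set u := mu (x - 1)
  set r := 2 * π ^ 2 / 3 / (u * (u - 1)) with hr
  have hu_inv : 1 / u ≤ 2 / 11 := by
    rw [div_le_div_iff₀ (by linarith) (by norm_num)]
    linarith
  have hu_pos : 0 < u * (u - 1) := mul_pos (by linarith) (by linarith)
  have : 0 ≤ r := by positivity
  have hxr : x * r ≤ 3 / 2 := by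
    rw [hr, ← mul_div_assoc, div_le_iff₀ hu_pos]
    nlinarith [pi_gt_d2]
  have h_first' : x * (r / u) ≤ 3 / 2 * (2 / 11) := by
    calc x * (r / u) = x * r * (1 / u) := by ring
      _ ≤ 3 / 2 * (2 / 11) := by gcongr
  have h_second' : x ^ 2 * (2 / u * r ^ 2) ≤ 2 * (2 / 11) * (3 / 2) ^ 2 := by
    calc x ^ 2 * (2 / u * r ^ 2) = 2 * (1 / u) * (x * r) ^ 2 := by ring
      _ ≤ 2 * (2 / 11) * (3 / 2) ^ 2 := by gcongr
  rw [secondDiff_div_self _ (by linarith)]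
  apply div_le_div_of_nonneg_right _ (mul_sq_sub_one_pos_of_one_lt (by linarith)).le
  unfold secondDiff
  nlinarith

theorem neg_one_ninth_le_log_d : -1 / 9 ≤ log d := by
  have hd : 9 / 10 ≤ d := by
    have h_sqrt : √3 ≤ 1.75 := Real.sqrt_le_iff.2 (by norm_num)
    rw [d, le_div_iff₀ (by positivity)]
    nlinarith [pi_gt_d2]
  have h := log_sub_log_le_sub_div (by linarith : 0 < d) one_pos
  rw [log_one, le_div_iff₀ (by linarith)] at h
  nlinarith

theorem log_mu_sub_log_mu_sub_one_le {x : ℝ} (hx : 6 ≤ x) :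
    log (mu x) - log (mu (x - 1)) ≤ 1 / 8 := by
  have hu := eleven_halves_le_mu (by linarith : 5 ≤ x - 1)
  have hv := eleven_halves_le_mu (by linarith : 5 ≤ x)
  refine (log_sub_log_le_sub_div (by linarith) (by linarith)).trans ?_
  rw [div_le_iff₀ (by linarith)]
  suffices mu x ≤ 9 / 8 * mu (x - 1) by linarith
  refine le_of_sq_le_sq ?_ (by linarith)
  nlinarith [(sqProgression_mu (by linarith : 25 / 24 < x)).mid_sq, pi_lt_d2, pi_pos]

theorem logarithmic_part_lt {x : ℝ} (hx : 6 ≤ x) :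
    (3 - 4 * log (mu (x - 1)) - 2 * log (x - 1)) / (x - 1) ^ 3 <
      (17 / 4 + 2 * log d - 4 * log (mu x) - 2 * log x) / (x * (x ^ 2 - 1)) := by
  have hx₁ : 0 < x - 1 := by linarith
  have hN := mul_sq_sub_one_pos_of_one_lt (by linarith : 1 < x)
  have h_den : (x - 1) ^ 3 ≤ x * (x ^ 2 - 1) := by nlinarith
  have h_log_mu : 1 ≤ log (mu (x - 1)) := by
    have hmu := eleven_halves_le_mu (by linarith : 5 ≤ x - 1)
    rw [le_log_iff_exp_le (by linarith)]
    linarith [exp_one_lt_three]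
  have h_log : 0 ≤ log (x - 1) := log_nonneg (by linarith)
  have h_step : log x - log (x - 1) ≤ 1 / 5 := by
    refine (log_sub_log_le_sub_div hx₁ (by linarith)).trans ?_
    rw [div_le_div_iff₀ hx₁ (by norm_num)]
    linarith
  calc (3 - 4 * log (mu (x - 1)) - 2 * log (x - 1)) / (x - 1) ^ 3
      ≤ (3 - 4 * log (mu (x - 1)) - 2 * log (x - 1)) / (x * (x ^ 2 - 1)) := by
        rw [div_le_div_iff₀ (by positivity) hN]
        exact mul_le_mul_of_nonpos_left h_den (by linarith)
    _ < (17 / 4 + 2 * log d - 4 * log (mu x) - 2 * log x) / (x * (x ^ 2 - 1)) := by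
        gcongr ?_ / _
        linarith [neg_one_ninth_le_log_d, log_mu_sub_log_mu_sub_one_le hx]

theorem secondDiff_realB {x : ℝ} (hx : 1 < mu (x - 1)) :
    secondDiff realB x =
      secondDiff (fun y ↦ mu y / y) x - secondDiff (fun y ↦ -log (1 - 1 / mu y) / y) x +
        secondDiff (fun y ↦ -(2 * log (mu y)) / y) x + secondDiff (fun y ↦ -log y / y) x +
        secondDiff (fun y ↦ log d / y) x := by
  unfold secondDiff realB
  rw [log_T (hx.trans_le (mu_mono (by linarith : x - 1 ≤ x + 1))), log_T hx,
    log_T (hx.trans_le (mu_mono (by linarith : x - 1 ≤ x)))]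
  ring

theorem le_secondDiff_neg_two_mul_log_mu_div {x : ℝ} (hx : 25 / 24 < x) :
    (3 - 4 * log (mu x)) / (x * (x ^ 2 - 1)) ≤
      secondDiff (fun y ↦ -(2 * log (mu y)) / y) x := by
  have h_linear : secondDiff (fun y ↦ -(2 * log (mu y)) / y) x =
      secondDiff (fun y ↦ -log (2 * π ^ 2 / 3 * y - π ^ 2 / 36) / y) x := by
    simp only [secondDiff, two_mul_log_mu (by linarith : 1 / 24 ≤ x + 1),
      two_mul_log_mu (by linarith : 1 / 24 ≤ x - 1), two_mul_log_mu (by linarith : 1 / 24 ≤ x)]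
  have h_four : 4 * log (mu x) = 2 * log (2 * π ^ 2 / 3 * x - π ^ 2 / 36) := by
    rw [← two_mul_log_mu (by linarith)]
    ring
  rw [h_linear, h_four]
  exact le_secondDiff_neg_log_linear_div (by positivity) (by positivity)
    (by nlinarith [sq_pos_of_pos pi_pos])

theorem le_secondDiff_neg_log_div {x : ℝ} (hx : 1 < x) :
    (3 - 2 * log x) / (x * (x ^ 2 - 1)) ≤ secondDiff (fun y ↦ -log y / y) x := by
  simpa only [one_mul, sub_zero] using
    le_secondDiff_neg_log_linear_div one_pos le_rfl (by linarith : 1 + 0 < 1 * x)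

theorem second_difference_B_lower_bound_general {x : ℝ} (hx : 6 ≤ x) :
    72 * π / ((x + 1) * (24 * x + 23) ^ ((3 : ℝ) / 2)) - 4 * log (mu (x - 1)) / (x - 1) ^ 3 -
      2 * log (x - 1) / (x - 1) ^ 3 + 3 / (x - 1) ^ 3 < secondDiff realB x := by
  have h_mu := le_secondDiff_mu_div (by linarith : 3 ≤ x)
  have h_one_sub := secondDiff_neg_log_one_sub_inv_mu_div_le hx
  have h_log_mu := le_secondDiff_neg_two_mul_log_mu_div (by linarith : 25 / 24 < x)
  have h_log := le_secondDiff_neg_log_div (by linarith : 1 < x)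
  have h_const := secondDiff_const_div (log d) (by linarith : 1 < x)
  have h_log_part := logarithmic_part_lt hx
  have h_split : (17 / 4 + 2 * log d - 4 * log (mu x) - 2 * log x) / (x * (x ^ 2 - 1)) =
      (3 - 4 * log (mu x)) / (x * (x ^ 2 - 1)) + (3 - 2 * log x) / (x * (x ^ 2 - 1)) +
        2 * log d / (x * (x ^ 2 - 1)) - 7 / 4 / (x * (x ^ 2 - 1)) := by
    ring
  rw [secondDiff_realB (by linarith [eleven_halves_le_mu (by linarith : 5 ≤ x - 1)])]
  rw [sub_div, sub_div] at h_log_part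
  linarith

theorem B_eq_realB (n : ℕ) : B n = realB n := by
  unfold B realB
  ring

theorem second_difference_B_lower_bound (n : ℕ) (hn : 40 ≤ n) :
    B (n + 1) + B (n - 1) - 2 * B n >
      72 * π / (((n : ℝ) + 1) * (24 * (n : ℝ) + 23) ^ ((3 : ℝ) / 2)) -
        4 * Real.log (mu ((n : ℝ) - 1)) / ((n : ℝ) - 1) ^ 3 -
        2 * Real.log ((n : ℝ) - 1) / ((n : ℝ) - 1) ^ 3 + 3 / ((n : ℝ) - 1) ^ 3 := by
  have h_general :=
    second_difference_B_lower_bound_general (by exact_mod_cast (by lia : 6 ≤ n) : (6 : ℝ) ≤ n)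
  simpa only [secondDiff, B_eq_realB, Nat.cast_add, Nat.cast_one,
    Nat.cast_sub (by lia : 1 ≤ n)] using h_general
end

section
/- For every integer n ≥ 60, 72π/((n-1)·(24n-25)^{3/2}) - 3π/(√24·n^{5/2} + 3π) < 1/(n-1)³. -/
open Real

/-!
Put `q = 3π / √(24 x)`. Bernoulli's inequality bounds the first fraction by
`q / ((x - 1) * (x - 25 / 16))`, and the second one equals `q / (x ^ 2 + q)`. The leading terms of
the two denominators agree, so the difference is at most `(1 + 25 / 16) * q` times a quantity
smaller than `1 / (x - 1) ^ 3`; finally `(1 + 25 / 16) * q ≤ 1` as soon as `25 ≤ x`.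
-/

lemma rpow_sub_one_mul_sub_le_sub_rpow {x u p : ℝ} (hx : 0 < x) (hu : u ≤ x) (hp : 1 ≤ p) :
    x ^ (p - 1) * (x - p * u) ≤ (x - u) ^ p := by
  have hux : u / x ≤ 1 := (div_le_one hx).2 hu
  calc x ^ (p - 1) * (x - p * u) = x ^ p * (1 + p * -(u / x)) := by
        rw [rpow_sub_one hx.ne']
        field_simp
        ring
    _ ≤ x ^ p * (1 + -(u / x)) ^ p := by
        gcongr
        exact one_add_mul_self_le_rpow_one_add (by linarith) hp
    _ = (x - u) ^ p := by
        rw [← mul_rpow hx.le (by linarith)]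
        congr 1
        field_simp
        ring

lemma sqrt_mul_sub_le_sub_rpow_three_halves {x u : ℝ} (hx : 0 < x) (hu : u ≤ x) :
    √x * (x - 3 / 2 * u) ≤ (x - u) ^ ((3 : ℝ) / 2) := by
  have bernoulli := rpow_sub_one_mul_sub_le_sub_rpow hx hu (p := 3 / 2) (by norm_num)
  rwa [show (3 / 2 - 1 : ℝ) = 1 / 2 by norm_num, ← sqrt_eq_rpow] at bernoulli

lemma rpow_five_halves {x : ℝ} (hx : 0 < x) : x ^ ((5 : ℝ) / 2) = √x * x ^ 2 := by
  rw [sqrt_eq_rpow, ← rpow_natCast, ← rpow_add hx]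
  norm_num

lemma div_sqrt_mul_rpow_add_self {a k x : ℝ} (hk : 0 < k) (hx : 0 < x) :
    a / (√k * x ^ ((5 : ℝ) / 2) + a) = a / √(k * x) / (x ^ 2 + a / √(k * x)) := by
  have hsqrt : √(k * x) ≠ 0 := by positivity
  rw [rpow_five_halves hx, ← mul_assoc, ← sqrt_mul hk.le, div_div, mul_add,
    mul_div_cancel₀ _ hsqrt]

lemma div_sub_div_sq_add_lt_one_div_cube {x c q : ℝ} (hc : 1 ≤ c) (hcx : c < x)
    (hx : 1 < (2 - c) * x) (hq : 0 ≤ q) (hcq : (1 + c) * q ≤ 1) :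
    q / ((x - 1) * (x - c)) - q / (x ^ 2 + q) < 1 / (x - 1) ^ 3 := by
  have hx0 : 0 < x := by linarith
  have hx1 : 0 < x - 1 := by linarith
  have hxc : 0 < x - c := by linarith
  have hqc : q ≤ c := by nlinarith
  calc q / ((x - 1) * (x - c)) - q / (x ^ 2 + q)
      = q * ((1 + c) * x - (c - q)) / ((x - 1) * (x - c) * (x ^ 2 + q)) := by
        field_simp
        ring
    _ ≤ q * ((1 + c) * x) / ((x - 1) * (x - c) * x ^ 2) := by
        gcongr <;> linarith
    _ = (1 + c) * q / ((x - 1) * (x * (x - c))) := by field_simp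
    _ ≤ 1 / ((x - 1) * (x * (x - c))) := by gcongr
    _ < 1 / ((x - 1) * (x - 1) ^ 2) := by
        gcongr
        linarith
    _ = 1 / (x - 1) ^ 3 := by ring

lemma one_add_mul_three_pi_div_sqrt_le_one {x : ℝ} (hx : 25 ≤ x) :
    (1 + 25 / 16) * (3 * π / √(24 * x)) ≤ 1 := by
  have hsqrt : 24.3 ≤ √(24 * x) := le_sqrt_of_sq_le (by linarith)
  rw [← mul_div_assoc, div_le_one (by linarith)]
  linarith [pi_lt_d2]

theorem elementary_ineq_general {x : ℝ} (hx : 25 ≤ x) :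
    72 * π / ((x - 1) * (24 * x - 25) ^ ((3 : ℝ) / 2)) -
        3 * π / (√24 * x ^ ((5 : ℝ) / 2) + 3 * π) <
      1 / (x - 1) ^ 3 := by
  set q := 3 * π / √(24 * x) with hq
  have hx1 : 0 < x - 1 := by linarith
  have first_le : 72 * π / ((x - 1) * (24 * x - 25) ^ ((3 : ℝ) / 2)) ≤
      q / ((x - 1) * (x - 25 / 16)) := by
    calc 72 * π / ((x - 1) * (24 * x - 25) ^ ((3 : ℝ) / 2))
        ≤ 72 * π / ((x - 1) * (√(24 * x) * (24 * x - 3 / 2 * 25))) := by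
          have : 0 < 24 * x - 3 / 2 * 25 := by linarith
          gcongr
          exact sqrt_mul_sub_le_sub_rpow_three_halves (by linarith) (by linarith)
      _ = q / ((x - 1) * (x - 25 / 16)) := by
          rw [hq, show 24 * x - 3 / 2 * 25 = 24 * (x - 25 / 16) by ring]
          field_simp
          norm_num
  rw [div_sqrt_mul_rpow_add_self (by norm_num) (by linarith)]
  calc _ ≤ q / ((x - 1) * (x - 25 / 16)) - q / (x ^ 2 + q) := by gcongr
    _ < 1 / (x - 1) ^ 3 :=
        div_sub_div_sq_add_lt_one_div_cube (by norm_num) (by linarith) (by linarith)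
          (by positivity) (one_add_mul_three_pi_div_sqrt_le_one hx)

theorem elementary_ineq (n : ℕ) (hn : 60 ≤ n) :
    72 * π / (((n : ℝ) - 1) * (24 * (n : ℝ) - 25) ^ ((3 : ℝ) / 2)) -
        3 * π / (Real.sqrt 24 * (n : ℝ) ^ ((5 : ℝ) / 2) + 3 * π) <
      1 / ((n : ℝ) - 1) ^ 3 :=
  elementary_ineq_general (by exact_mod_cast (by lia : 25 ≤ n))
end
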